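/- (Lackner–Panholzer, Corollary 4.11, subcritical case) Fix ρ ∈ (0, 1/2) and set m = m(n) = ⌊ρn⌋. Then the probability p_{n,m} = M_{n,m} / n^(n+m) that a uniformly random pair (f,s), with f an n-mapping and s ∈ {1,…,n}^m, is a mapping parking function satisfies lim_{n→∞} p_{n,m} = √(1−2ρ)/(1−ρ). -/

import Mathlib

/-- A rooted labelled tree on the vertex set `Fin n`, encoded by its root and its parent
map: the root is its own parent and every vertex reaches the root by iterating the parent
map (this data is equivalent to a tree on `{1,…,n}` with a distinguished root). -/
structure LabelledRootedTree (n : ℕ) where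
  root : Fin n
  parent : Fin n → Fin n
  parent_root : parent root = root
  reaches_root : ∀ v : Fin n, ∃ k : ℕ, parent^[k] v = root

/-- The parking procedure driven by a step map `f` on `Fin n` (the parent map of a tree, or
an `n`-mapping).  `occ` is the list of occupied vertices; the drivers in the list arrive in
order, and the driver starting at `v` parks at `f^[i] v` for the least `i` such that
`f^[i] v` is unoccupied (searching `i < n` suffices, since the forward orbit of `v` has at
most `n` distinct vertices, all appearing among the first `n` iterates, in visit order).
The result is `none` if some driver finds every vertex on its route occupied. -/
def parkAux (n : ℕ) (f : Fin n → Fin n) : List (Fin n) → List (Fin n) → Option (List (Fin n))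
  | occ, [] => some occ
  | occ, v :: rest =>
    match (List.range n).find? (fun i => decide (f^[i] v ∉ occ)) with
    | none => none
    | some i => parkAux n f (f^[i] v :: occ) rest

/-- `s : Fin m → Fin n` is a parking function for the step map `f` on `Fin n`:
all `m` drivers, arriving in order with preferences `s 1, …, s m`, park successfully. -/
def ParkingSucceeds {n m : ℕ} (f : Fin n → Fin n) (s : Fin m → Fin n) : Prop :=
  (parkAux n f [] (List.ofFn s)).isSome

/-- `s` is a tree parking function for the rooted labelled tree `T`: each driver `k` starts
at `s k` and drives towards the root, parking at the first unoccupied vertex. -/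
def IsTreeParking {n m : ℕ} (T : LabelledRootedTree n) (s : Fin m → Fin n) : Prop :=
  ParkingSucceeds T.parent s

/-- `M_{n,m}`: the number of pairs `(f, s)` with `f` an `n`-mapping and
`s ∈ {1,…,n}^m` a mapping parking function for `f`. -/
noncomputable def MCount (n m : ℕ) : ℕ :=
  Nat.card {p : (Fin n → Fin n) × (Fin m → Fin n) // ParkingSucceeds p.1 p.2}

/-- `F_{n,m}`: the number of pairs `(T, s)` with `T` a rooted labelled tree on `{1,…,n}`
and `s ∈ {1,…,n}^m` a tree parking function for `T`. -/
noncomputable def FCount (n m : ℕ) : ℕ :=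
  Nat.card {p : LabelledRootedTree n × (Fin m → Fin n) // IsTreeParking p.1 p.2}

open Filter

set_option linter.unusedSectionVars false
namespace LP
open Finset Classical

inductive Reach {α : Type} [LinearOrder α] (h : α → Option α) (k : α) : α → Prop
  | base : Reach h k k
  | step {v w : α} : v < k → h v = some w → Reach h k w → Reach h k v

inductive Term {α : Type} (h : α → Option α) : α → Prop
  | nil {v : α} : h v = none → Term h v
  | step {v w : α} : h v = some w → Term h w → Term h v

variable {α : Type} [LinearOrder α] [Fintype α]

noncomputable def Bk (h : α → Option α) (k : α) : Finset α := univ.filter (Reach h k)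

noncomputable def FS (A : Finset α) : Finset (α → Option α) :=
  univ.filter (fun h => ∀ a, (a ∉ A → h a = none) ∧ ∀ b, h a = some b → b ∈ A)

noncomputable def AFS (A : Finset α) : Finset (α → Option α) :=
  (FS A).filter (fun h => ∀ v, Term h v)

noncomputable def SA (N : ℕ) (A : Finset α) : ℕ :=
  ∑ h ∈ FS A, ∏ k ∈ A, (if h k = none then N else 1) * (Bk h k).card

noncomputable def QA (A : Finset α) : ℕ :=
  ∑ h ∈ AFS A, ∏ k ∈ A, (Bk h k).card

noncomputable def comb (m : α) (C : Finset α) (o : Option α) (g h' : α → Option α) : α → Option α :=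
  fun v => if v = m then o else if v ∈ C then some ((g v).getD m) else h' v

lemma mem_FS {A : Finset α} {h : α → Option α} :
    h ∈ FS A ↔ ∀ a, (a ∉ A → h a = none) ∧ ∀ b, h a = some b → b ∈ A := by simp [FS]

lemma mem_Bk {h : α → Option α} {k v : α} : v ∈ Bk h k ↔ Reach h k v := by simp [Bk]

lemma FS_dom {A : Finset α} {h : α → Option α} (hh : h ∈ FS A) {a b : α} (e : h a = some b) :
    a ∈ A ∧ b ∈ A := by
  rw [mem_FS] at hh
  refine ⟨?_, (hh a).2 b e⟩
  by_contra hc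
  rw [(hh a).1 hc] at e; cases e

lemma Reach_inv {h : α → Option α} {k v : α} (hr : Reach h k v) :
    v = k ∨ (v < k ∧ ∃ w, h v = some w ∧ Reach h k w) := by
  cases hr with
  | base => left; rfl
  | step a b c => right; exact ⟨a, _, b, c⟩

section comb
variable {m : α} {A' C : Finset α} {o : Option α} {g h' : α → Option α}

lemma comb_m : comb m C o g h' m = o := by simp [comb]
lemma comb_C (hm : ∀ a ∈ A', a < m) (hC : C ⊆ A') {v : α} (hv : v ∈ C) :
    comb m C o g h' v = some ((g v).getD m) := by
  have := (hm v (hC hv)).ne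
  simp [comb, this, hv]
lemma comb_o {v : α} (hv : v ≠ m) (hv' : v ∉ C) :
    comb m C o g h' v = h' v := by
  simp [comb, hv, hv']

lemma getD_mem (hg : g ∈ FS C) (v : α) : (g v).getD m ∈ insert m C := by
  cases e : g v with
  | none => simp
  | some w => simp [(FS_dom hg e).2]

lemma comb_FS (hm : ∀ a ∈ A', a < m) (hC : C ⊆ A') (ho : o ∈ insertNone (insert m A'))
    (hg : g ∈ FS C) (hh : h' ∈ FS (A' \ C)) : comb m C o g h' ∈ FS (insert m A') := by
  rw [mem_FS]
  intro a
  by_cases ha : a = m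
  · subst ha
    rw [comb_m]
    refine ⟨fun h => by simp at h, fun b hb => ?_⟩
    subst hb; simpa using ho
  by_cases hc : a ∈ C
  · rw [comb_C hm hC hc]
    refine ⟨fun h => absurd (mem_insert_of_mem (hC hc)) h, fun b hb => ?_⟩
    have := getD_mem (m := m) hg a
    simp only [Option.some.injEq] at hb
    rw [hb] at this
    exact insert_subset_insert _ hC this
  · rw [comb_o ha hc]
    refine ⟨fun h => (mem_FS.1 hh a).1 (fun h2 => h (mem_insert_of_mem (Finset.mem_sdiff.1 h2).1)),
      fun b hb => mem_insert_of_mem (Finset.mem_sdiff.1 (FS_dom hh hb).2).1⟩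

lemma comb_reach (hm : ∀ a ∈ A', a < m) (hC : C ⊆ A')
    (hg : g ∈ AFS C) {v : α} (hv : v ∈ C) : Reach (comb m C o g h') m v := by
  have hg1 := (mem_filter.1 hg).1
  have ht := (mem_filter.1 hg).2 v
  induction ht with
  | @nil v e =>
    refine Reach.step (hm v (hC hv)) (by rw [comb_C hm hC hv, e]) ?_
    exact Reach.base
  | @step v w e _ ih =>
    refine Reach.step (hm v (hC hv)) (by rw [comb_C hm hC hv, e]) ?_
    exact ih (FS_dom hg1 e).2

lemma comb_Bkm (hm : ∀ a ∈ A', a < m) (hC : C ⊆ A')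
    (hg : g ∈ AFS C) (hh : h' ∈ FS (A' \ C)) : Bk (comb m C o g h') m = insert m C := by
  ext v
  rw [mem_Bk]
  constructor
  · intro hr
    induction hr with
    | base => simp
    | @step v w hv e _ ih =>
      by_contra hc
      simp only [mem_insert, not_or] at hc
      rw [comb_o hc.1 hc.2] at e
      have := (FS_dom hh e).2
      rw [mem_insert] at ih
      rcases ih with rfl | ih
      · exact absurd (hm _ (Finset.mem_sdiff.1 this).1) (lt_irrefl _)
      · exact (Finset.mem_sdiff.1 this).2 ih
  · intro hv
    rcases mem_insert.1 hv with rfl | hv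
    · exact Reach.base
    · exact comb_reach hm hC hg hv

lemma comb_Bkg (hm : ∀ a ∈ A', a < m) (hC : C ⊆ A')
    (hg : g ∈ FS C) (hh : h' ∈ FS (A' \ C)) {k : α} (hk : k ∈ C) :
    Bk (comb m C o g h') k = Bk g k := by
  have hkm := hm k (hC hk)
  ext v
  rw [mem_Bk, mem_Bk]
  constructor
  · intro hr
    induction hr with
    | base => exact Reach.base
    | @step v w hv e _ ih =>
      have hwC : w ∈ C := by
        rcases Reach_inv ih with rfl | ⟨_, x, hx, _⟩
        · exact hk
        · exact (FS_dom hg hx).1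
      have hwm := (hm w (hC hwC)).ne
      by_cases hvC : v ∈ C
      · rw [comb_C hm hC hvC] at e
        refine Reach.step hv ?_ ih
        cases e2 : g v with
        | none => rw [e2] at e; simp at e; exact absurd e.symm hwm
        | some x => rw [e2] at e; simpa using e
      · rw [comb_o (hv.trans hkm).ne hvC] at e
        exact absurd hwC (Finset.mem_sdiff.1 (FS_dom hh e).2).2
  · intro hr
    induction hr with
    | base => exact Reach.base
    | @step v w hv e _ ih =>
      refine Reach.step hv ?_ ih
      rw [comb_C hm hC (FS_dom hg e).1, e]; rfl

lemma comb_Bkh (hm : ∀ a ∈ A', a < m) (hC : C ⊆ A')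
    (hg : g ∈ FS C) (hh : h' ∈ FS (A' \ C)) {k : α} (hk : k ∈ A' \ C) :
    Bk (comb m C o g h') k = Bk h' k := by
  have hkm := hm k (Finset.mem_sdiff.1 hk).1
  ext v
  rw [mem_Bk, mem_Bk]
  constructor
  · intro hr
    induction hr with
    | base => exact Reach.base
    | @step v w hv e _ ih =>
      have hwC : w ∈ A' \ C := by
        rcases Reach_inv ih with rfl | ⟨_, x, hx, _⟩
        · exact hk
        · exact (FS_dom hh hx).1
      have hwm := (hm w (Finset.mem_sdiff.1 hwC).1).ne
      by_cases hvC : v ∈ C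
      · rw [comb_C hm hC hvC] at e
        have := getD_mem (m := m) hg v
        simp only [Option.some.injEq] at e
        rw [e, mem_insert] at this
        rcases this with h | h
        · exact absurd h hwm
        · exact absurd h (Finset.mem_sdiff.1 hwC).2
      · rw [comb_o (hv.trans hkm).ne hvC] at e
        exact Reach.step hv e ih
  · intro hr
    induction hr with
    | base => exact Reach.base
    | @step v w hv e _ ih =>
      refine Reach.step hv ?_ ih
      have := Finset.mem_sdiff.1 (FS_dom hh e).1
      rw [comb_o (hm v this.1).ne this.2, e]

lemma comb_acyc (hm : ∀ a ∈ A', a < m) (hC : C ⊆ A') 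
    (hg : g ∈ AFS C) (hh : h' ∈ FS (A' \ C)) :
    (∀ v, Term (comb m C o g h') v) ↔ ((∀ v, Term h' v) ∧ ∀ b ∈ insert m C, o ≠ some b) := by
  have hg1 := (mem_filter.1 hg).1
  constructor
  · intro ht
    constructor
    · intro v
      have := ht v
      induction this with
      | @nil v e =>
        by_cases e2 : h' v = none
        · exact Term.nil e2
        · obtain ⟨w, hw⟩ := Option.ne_none_iff_exists'.1 e2
          have := Finset.mem_sdiff.1 (FS_dom hh hw).1
          rw [comb_o (hm v this.1).ne this.2] at e
          exact absurd e e2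
      | @step v w e _ ih =>
        by_cases e2 : h' v = none
        · exact Term.nil e2
        · obtain ⟨x, hx⟩ := Option.ne_none_iff_exists'.1 e2
          have := Finset.mem_sdiff.1 (FS_dom hh hx).1
          rw [comb_o (hm v this.1).ne this.2] at e
          exact Term.step e ih
    · intro b hb hob
      have key : ∀ v, Term (comb m C o g h') v → v ∈ insert m C → False := by
        have step : ∀ v ∈ insert m C, ∃ w ∈ insert m C, comb m C o g h' v = some w := by
          intro v hv
          rcases mem_insert.1 hv with rfl | hv
          · exact ⟨b, hb, by rw [comb_m, hob]⟩
          · exact ⟨_, getD_mem hg1 v, comb_C hm hC hv⟩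
        intro v hv
        induction hv with
        | @nil v e => intro h; obtain ⟨w, _, hw⟩ := step v h; rw [e] at hw; cases hw
        | @step v w e _ ih =>
          intro h; obtain ⟨x, hx, hw⟩ := step v h
          rw [e] at hw; cases hw; exact ih hx
      exact key m (ht m) (mem_insert_self _ _)
  · rintro ⟨ht, ho⟩
    have h1 : ∀ v, Term h' v → v ∉ insert m C → Term (comb m C o g h') v := by
      intro v hv
      induction hv with
      | @nil v e =>
        intro h; simp only [mem_insert, not_or] at h
        exact Term.nil (by rw [comb_o h.1 h.2, e])
      | @step v w e _ ih =>
        intro h; simp only [mem_insert, not_or] at h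
        have := Finset.mem_sdiff.1 (FS_dom hh e).2
        refine Term.step (by rw [comb_o h.1 h.2, e]) (ih ?_)
        simp [this.2, (hm w this.1).ne]
    have h2 : Term (comb m C o g h') m := by
      cases e : o with
      | none => exact Term.nil (by rw [comb_m])
      | some w =>
        refine Term.step (by rw [comb_m]) ?_
        rw [← e]
        exact h1 w (ht w) (fun h => ho w h e)
    have h3 : ∀ v, Reach (comb m C o g h') m v → Term (comb m C o g h') v := by
      intro v hv
      induction hv with
      | base => exact h2
      | @step v w _ e _ ih => exact Term.step e ih
    intro v
    by_cases hv : v ∈ insert m C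
    · rcases mem_insert.1 hv with rfl | hv
      · exact h2
      · exact h3 v (comb_reach hm hC hg hv)
    · exact h1 v (ht v) hv

end comb

noncomputable def spg (m : α) (C : Finset α) (h : α → Option α) : α → Option α :=
  fun v => if v ∈ C then (if h v = some m then none else h v) else none
noncomputable def sph (D : Finset α) (h : α → Option α) : α → Option α :=
  fun v => if v ∈ D then h v else none

lemma decomp {M : Type} [AddCommMonoid M] (m : α) (A' : Finset α) (hm : ∀ a ∈ A', a < m)
    (w : (α → Option α) → M) :
    ∑ h ∈ FS (insert m A'), w h = ∑ C ∈ A'.powerset, ∑ o ∈ insertNone (insert m A'),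
      ∑ g ∈ AFS C, ∑ h' ∈ FS (A' \ C), w (comb m C o g h') := by
  have hsub : ∀ h ∈ FS (insert m A'), ∀ v ∈ Bk h m, v ≠ m → v ∈ A' := by
    intro h hh v hv hvm
    rcases Reach_inv (mem_Bk.1 hv) with rfl | ⟨_, x, hx, _⟩
    · exact absurd rfl hvm
    · exact (mem_insert.1 (FS_dom hh hx).1).resolve_left hvm
  have hmaps : ∀ h ∈ FS (insert m A'), (Bk h m).erase m ∈ A'.powerset := by
    intro h hh
    rw [mem_powerset]
    intro v hv
    rw [mem_erase] at hv
    exact hsub h hh v hv.2 hv.1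
  rw [← sum_fiberwise_of_maps_to hmaps]
  refine sum_congr rfl fun C hC => ?_
  rw [mem_powerset] at hC
  have hmA : m ∉ A' := fun h => lt_irrefl _ (hm m h)
  have hmC : m ∉ C := fun h => hmA (hC h)
  simp_rw [← sum_product']
  refine sum_bij' (fun h _ => (h m, spg m C h, sph (A' \ C) h))
    (fun p _ => comb m C p.1 p.2.1 p.2.2) ?_ ?_ ?_ ?_ ?_
  · intro h hh
    obtain ⟨hh, hB⟩ := mem_filter.1 hh
    have hBC : ∀ v, Reach h m v ↔ v = m ∨ v ∈ C := by
      intro v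
      rw [← hB, mem_erase, mem_Bk]
      by_cases hv : v = m
      · subst hv; simp [Reach.base]
      · simp [hv]
    have hinC : ∀ v ∈ C, ∃ w, h v = some w ∧ (w = m ∨ w ∈ C) := by
      intro v hv
      rcases Reach_inv ((hBC v).2 (Or.inr hv)) with rfl | ⟨_, x, hx, hr⟩
      · exact absurd hv hmC
      · exact ⟨x, hx, (hBC x).1 hr⟩
    simp only [mem_product]
    refine ⟨?_, ?_, ?_⟩
    · cases e : h m with
      | none => simp
      | some w => rw [some_mem_insertNone]; exact (FS_dom hh e).2
    · rw [AFS, mem_filter, mem_FS]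
      refine ⟨fun a => ⟨fun ha => by simp [spg, ha], fun b hb => ?_⟩, ?_⟩
      · by_cases ha : a ∈ C
        · obtain ⟨x, hx, hx2⟩ := hinC a ha
          simp only [spg, ha, if_true, hx] at hb
          split_ifs at hb with h1
          cases hb
          rcases hx2 with rfl | h2
          · exact absurd rfl h1
          · exact h2
        · simp [spg, ha] at hb
      · intro v
        by_cases hv : v ∈ C
        · have hr := (hBC v).2 (Or.inr hv)
          induction hr with
          | base => exact absurd hv hmC
          | @step v w hv1 e hr ih =>
            rcases (hBC w).1 hr with rfl | hw
            · exact Term.nil (by simp [spg, hv, e])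
            · refine Term.step (w := w) ?_ (ih hw)
              have : w ≠ m := fun h => hmC (h ▸ hw)
              simp [spg, hv, e, this]
        · exact Term.nil (by simp [spg, hv])
    · rw [mem_FS]
      intro a
      refine ⟨fun ha => by simp only [sph, ha, if_false], fun b hb => ?_⟩
      by_cases ha : a ∈ A' \ C
      · simp only [sph, ha, if_true] at hb
        have hb2 := (FS_dom hh hb).2
        have ha' := Finset.mem_sdiff.1 ha
        have : ¬ Reach h m b := by
          intro hr
          have := (hBC a).1 (Reach.step (hm a ha'.1) hb hr)
          rcases this with rfl | h
          · exact hmA ha'.1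
          · exact ha'.2 h
        rw [hBC, not_or] at this
        rw [Finset.mem_sdiff]
        exact ⟨(mem_insert.1 hb2).resolve_left this.1, this.2⟩
      · simp [sph, ha] at hb
  · rintro ⟨o, g, h'⟩ hp
    simp only [mem_product] at hp
    obtain ⟨ho, hg, hh⟩ := hp
    rw [mem_filter]
    refine ⟨comb_FS hm hC ho (mem_filter.1 hg).1 hh, ?_⟩
    rw [comb_Bkm hm hC hg hh, erase_insert hmC]
  · intro h hh
    obtain ⟨hh, hB⟩ := mem_filter.1 hh
    funext v
    by_cases hv : v = m
    · subst hv; simp [comb]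
    by_cases hvC : v ∈ C
    · have hr : Reach h m v := by
        rw [← hB, mem_erase, mem_Bk] at hvC; exact hvC.2
      simp only [comb, hv, hvC, if_false, if_true, spg]
      rcases Reach_inv hr with rfl | ⟨_, x, hx, _⟩
      · exact absurd rfl hv
      · by_cases hxm : x = m
        · simp [hx, hxm]
        · simp [hx, hxm]
    · simp only [comb, hv, hvC, if_false, sph, Finset.mem_sdiff]
      by_cases hvA : v ∈ A'
      · simp [hvA]
      · simp only [hvA, false_and, if_false]
        exact ((mem_FS.1 hh v).1 (by simp [hv, hvA])).symm
  · rintro ⟨o, g, h'⟩ hp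
    simp only [mem_product] at hp
    obtain ⟨ho, hg, hh⟩ := hp
    have hg1 := (mem_filter.1 hg).1
    refine Prod.ext comb_m (Prod.ext ?_ ?_)
    · funext v
      simp only [spg]
      by_cases hv : v ∈ C
      · rw [if_pos hv, comb_C hm hC hv]
        cases e : g v with
        | none => simp
        | some x =>
          have : x ≠ m := fun h => hmC (h ▸ (FS_dom hg1 e).2)
          simp [this]
      · rw [if_neg hv, (mem_FS.1 hg1 v).1 hv]
    · funext v
      simp only [sph]
      by_cases hv : v ∈ A' \ C
      · have := Finset.mem_sdiff.1 hv
        rw [if_pos hv, comb_o (hm v this.1).ne this.2]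
      · rw [if_neg hv, (mem_FS.1 hh v).1 hv]
  · intro h hh
    obtain ⟨hh, hB⟩ := mem_filter.1 hh
    congr 1
    funext v
    by_cases hv : v = m
    · subst hv; simp [comb]
    by_cases hvC : v ∈ C
    · have hr : Reach h m v := by
        rw [← hB, mem_erase, mem_Bk] at hvC; exact hvC.2
      simp only [comb, hv, hvC, if_false, if_true, spg]
      rcases Reach_inv hr with rfl | ⟨_, x, hx, _⟩
      · exact absurd rfl hv
      · by_cases hxm : x = m
        · simp [hx, hxm]
        · simp [hx, hxm]
    · simp only [comb, hv, hvC, if_false, sph, Finset.mem_sdiff]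
      by_cases hvA : v ∈ A'
      · simp [hvA]
      · simp only [hvA, false_and, if_false]
        exact ((mem_FS.1 hh v).1 (by simp [hv, hvA]))

lemma SA_rec (N : ℕ) (m : α) (A' : Finset α) (hm : ∀ a ∈ A', a < m) :
    SA N (insert m A') = ∑ C ∈ A'.powerset, (N + A'.card + 1) * ((C.card + 1) * QA C)
      * SA N (A' \ C) := by
  have hmA : m ∉ A' := fun h => lt_irrefl _ (hm m h)
  rw [SA, decomp m A' hm]
  refine sum_congr rfl fun C hC => ?_
  rw [mem_powerset] at hC
  have hmC : m ∉ C := fun h => hmA (hC h)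
  have key : ∀ o ∈ insertNone (insert m A'), ∀ g ∈ AFS C, ∀ h' ∈ FS (A' \ C),
      ∏ k ∈ insert m A', (if comb m C o g h' k = none then N else 1) * (Bk (comb m C o g h') k).card
      = ((if o = none then N else 1) * (C.card + 1)) * ((∏ k ∈ C, (Bk g k).card) *
        ∏ k ∈ A' \ C, (if h' k = none then N else 1) * (Bk h' k).card) := by
    intro o ho g hg h' hh
    have hg1 := (mem_filter.1 hg).1
    rw [prod_insert hmA, comb_m, comb_Bkm hm hC hg hh, card_insert_of_notMem hmC]
    congr 1
    rw [← prod_sdiff hC, mul_comm]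
    congr 1
    · refine prod_congr rfl fun k hk => ?_
      rw [comb_C hm hC hk, comb_Bkg hm hC hg1 hh hk]; simp
    · refine prod_congr rfl fun k hk => ?_
      have := Finset.mem_sdiff.1 hk
      rw [comb_o (hm k this.1).ne this.2, comb_Bkh hm hC hg1 hh hk]
  rw [sum_congr rfl fun o ho => sum_congr rfl fun g hg => sum_congr rfl fun h' hh =>
    key o ho g hg h' hh]
  simp only [← mul_sum, ← sum_mul]
  have : ∑ o ∈ insertNone (insert m A'), (if o = none then N else 1) = N + A'.card + 1 := by
    rw [Finset.sum_insertNone]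
    simp [card_insert_of_notMem hmA]; ring
  rw [this, SA, QA]
  ring

lemma QA_rec (m : α) (A' : Finset α) (hm : ∀ a ∈ A', a < m) :
    QA (insert m A') = ∑ C ∈ A'.powerset, ((A' \ C).card + 1) * ((C.card + 1) * QA C)
      * QA (A' \ C) := by
  have hmA : m ∉ A' := fun h => lt_irrefl _ (hm m h)
  rw [QA, AFS, sum_filter, decomp m A' hm]
  refine sum_congr rfl fun C hC => ?_
  rw [mem_powerset] at hC
  have hmC : m ∉ C := fun h => hmA (hC h)
  have key : ∀ o ∈ insertNone (insert m A'), ∀ g ∈ AFS C, ∀ h' ∈ FS (A' \ C),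
      (if ∀ v, Term (comb m C o g h') v then
        ∏ k ∈ insert m A', (Bk (comb m C o g h') k).card else 0)
      = ((if ∀ b ∈ insert m C, o ≠ some b then 1 else 0) * (C.card + 1)) * ((∏ k ∈ C, (Bk g k).card) *
        (if ∀ v, Term h' v then ∏ k ∈ A' \ C, (Bk h' k).card else 0)) := by
    intro o ho g hg h' hh
    have hg1 := (mem_filter.1 hg).1
    simp only [comb_acyc hm hC hg hh]
    by_cases h1 : ∀ v, Term h' v
    swap
    · simp [h1]
    by_cases h2 : ∀ b ∈ insert m C, o ≠ some b
    swap
    · rw [if_neg (fun h => h2 h.2), if_neg h2]; simp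
    rw [if_pos ⟨h1, h2⟩, if_pos h2, if_pos h1]
    rw [prod_insert hmA, comb_Bkm hm hC hg hh, card_insert_of_notMem hmC, one_mul]
    congr 1
    rw [← prod_sdiff hC, mul_comm]
    congr 1
    · refine prod_congr rfl fun k hk => ?_
      rw [comb_Bkg hm hC hg1 hh hk]
    · refine prod_congr rfl fun k hk => ?_
      rw [comb_Bkh hm hC hg1 hh hk]
  rw [sum_congr rfl fun o ho => sum_congr rfl fun g hg => sum_congr rfl fun h' hh =>
    key o ho g hg h' hh]
  simp only [← mul_sum, ← sum_mul]
  have : ∑ o ∈ insertNone (insert m A'), (if ∀ b ∈ insert m C, o ≠ some b then 1 else 0)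
      = (A' \ C).card + 1 := by
    rw [Finset.sum_insertNone, add_comm]
    congr 1
    · rw [← sum_filter, ← card_eq_sum_ones]
      congr 1
      ext v
      simp only [mem_filter, mem_insert, Finset.mem_sdiff, ne_eq, Option.some.injEq]
      constructor
      · rintro ⟨h1 | h1, h2⟩
        · exact absurd h1 (h2 m (Or.inl rfl))
        · exact ⟨h1, fun h => h2 v (Or.inr h) rfl⟩
      · rintro ⟨h1, h2⟩
        refine ⟨Or.inr h1, ?_⟩
        rintro b (rfl | hb) rfl
        · exact hmA h1
        · exact h2 hb
    · simp
  rw [this, QA, QA]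
  have e2 : ∑ h ∈ AFS (A' \ C), ∏ k ∈ A' \ C, (Bk h k).card = ∑ h ∈ FS (A' \ C), if ∀ v, Term h v then ∏ k ∈ A' \ C, (Bk h k).card else 0 := by
    rw [AFS, sum_filter]
  rw [e2]
  ring
end LP
namespace LP
open PowerSeries

noncomputable def E (a : ℂ) : PowerSeries ℂ := rescale a (exp ℂ)

lemma E_mul (a b : ℂ) : E a * E b = E (a + b) := exp_mul_exp_eq_exp_add a b
lemma E_zero : E 0 = 1 := by
  simp [E]
lemma coeff_E (a : ℂ) (k : ℕ) : coeff k (E a) = a ^ k / (k.factorial : ℂ) := by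
  simp [E, coeff_rescale, coeff_exp]; rfl
lemma deriv_E (a : ℂ) : d⁄dX ℂ (E a) = C a * E a := by
  ext k
  rw [coeff_derivative, coeff_C_mul, coeff_E, coeff_E, Nat.factorial_succ]
  have : (k.factorial : ℂ) ≠ 0 := by exact_mod_cast k.factorial_ne_zero
  have : (k + 1 : ℂ) ≠ 0 := by exact_mod_cast k.succ_ne_zero
  push_cast
  field_simp
  ring

lemma cE (a : ℂ) : constantCoeff (E a) = 1 := by
  rw [← coeff_zero_eq_constantCoeff_apply, coeff_E]; simp

noncomputable def lam (m : ℕ) (F : PowerSeries ℂ) : ℂ :=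
  coeff m (F * E (2 * m) * (1 - C 2 * X))

lemma lam_add (m : ℕ) (F G : PowerSeries ℂ) : lam m (F + G) = lam m F + lam m G := by
  simp [lam, add_mul]
lemma lam_C (m : ℕ) (c : ℂ) (F : PowerSeries ℂ) : lam m (C c * F) = c * lam m F := by
  rw [lam, lam, mul_assoc, mul_assoc, coeff_C_mul, mul_assoc]
lemma lam_Z (m : ℕ) (F : PowerSeries ℂ) : lam (m + 1) (X * E (-2) * F) = lam m F := by
  rw [lam, lam]
  have : E (2 * (m + 1 : ℕ)) = E 2 * E (2 * m) := by rw [E_mul]; congr 1; push_cast; ring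
  have h0 : E (-2) * E 2 = 1 := by rw [E_mul]; simp [E_zero]
  rw [this, show X * E (-2) * F * (E 2 * E (2 * m)) * (1 - C 2 * X) =
    X * ((F * E (2 * m) * (1 - C 2 * X))) * (E (-2) * E 2) by ring, h0, mul_one, coeff_succ_X_mul]
lemma lam_zero (F : PowerSeries ℂ) : lam 0 F = constantCoeff F := by
  simp [lam, E_zero]
lemma lam_Z0 (F : PowerSeries ℂ) : lam 0 (X * E (-2) * F) = 0 := by
  simp [lam_zero]
lemma lam_one (m : ℕ) : lam (m + 1) 1 = 0 := by
  rw [lam, one_mul, mul_sub, mul_one, map_sub, mul_left_comm, coeff_C_mul, coeff_succ_mul_X,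
    coeff_E, coeff_E, Nat.factorial_succ]
  have : (m.factorial : ℂ) ≠ 0 := by exact_mod_cast m.factorial_ne_zero
  have : (m + 1 : ℂ) ≠ 0 := by exact_mod_cast m.succ_ne_zero
  push_cast
  field_simp
  ring
lemma exists_Z (F : PowerSeries ℂ) : ∃ F1, F = C (constantCoeff F) + X * E (-2) * F1 := by
  have : (X : PowerSeries ℂ) ∣ F - C (constantCoeff F) := by
    rw [X_dvd_iff]; simp
  obtain ⟨G, hG⟩ := this
  refine ⟨E 2 * G, ?_⟩
  have h0 : E (-2) * E 2 = 1 := by rw [E_mul]; simp [E_zero]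
  linear_combination hG - X * G * h0

lemma lam_mul (m : ℕ) : ∀ F G : PowerSeries ℂ, lam m (F * G) =
    ∑ p ∈ Finset.HasAntidiagonal.antidiagonal m, lam p.1 F * lam p.2 G := by
  induction m with
  | zero => intro F G; simp [lam_zero]
  | succ m ih =>
    intro F G
    obtain ⟨F1, hF⟩ := exists_Z F
    have h1 : ∀ i, lam (i + 1) F = lam i F1 := by
      intro i
      rw [hF, lam_add, lam_Z, ← mul_one (C _), lam_C, lam_one]; simp
    rw [Finset.Nat.sum_antidiagonal_succ]
    simp only [h1]
    rw [← ih, lam_zero]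
    conv_lhs => rw [hF]
    rw [add_mul, lam_add, lam_C, mul_assoc, lam_Z]

lemma lam_deriv (m : ℕ) (F H : PowerSeries ℂ) (h : H * (1 - C 2 * X) = d⁄dX ℂ F * E 2) :
    (m + 1 : ℂ) * lam (m + 1) F = lam m H := by
  have e1 : E (2 * (m + 1 : ℕ)) = E 2 * E (2 * m) := by rw [E_mul]; congr 1; push_cast; ring
  have e2 : coeff m (d⁄dX ℂ (F * E (2 * (m + 1 : ℕ)))) =
      lam m H + 2 * (m + 1) * coeff m (F * E (2 * (m + 1 : ℕ))) := by
    rw [Derivation.leibniz, deriv_E, smul_eq_mul, smul_eq_mul, map_add, mul_left_comm F,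
      coeff_C_mul, add_comm]
    congr 1
    · rw [lam, show H * E (2 * m) * (1 - C 2 * X) = H * (1 - C 2 * X) * E (2 * m) by ring, h, e1]
      ring_nf
    · push_cast; ring
  rw [coeff_derivative] at e2
  rw [lam, mul_sub, mul_one, map_sub, mul_left_comm, coeff_C_mul, coeff_succ_mul_X]
  linear_combination e2

lemma lam_deriv' (m : ℕ) (F H : PowerSeries ℂ) (h : H * (1 - C 2 * X) = d⁄dX ℂ F * E 2) :
    (m : ℂ) * lam m F = lam m (X * E (-2) * H) := by
  cases m with
  | zero => simp [lam_Z0]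
  | succ m => rw [lam_Z, ← lam_deriv m F H h]; push_cast; ring

noncomputable def cc (i : ℕ) : ℂ := lam i (E 2 * (1 - X))

lemma cc_aux : E 4 * (1 - C 2 * X) = d⁄dX ℂ (E 2 * (1 - X)) * E 2 := by
  rw [Derivation.leibniz, deriv_E, smul_eq_mul, smul_eq_mul, map_sub, derivative_X,
    derivative_one, show (4 : ℂ) = 2 + 2 by norm_num, ← E_mul, show (C (2:ℂ)) = 2 from map_ofNat C 2]
  ring

lemma cc_succ (i : ℕ) : (i + 1 : ℂ) * cc i = lam i (E 2) := by
  have := lam_deriv' i _ _ cc_aux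
  rw [add_mul, one_mul, cc, this, ← lam_add]
  have h : E (-2) * E 4 = E 2 := by rw [E_mul]; norm_num
  congr 1
  linear_combination X * h

lemma cc_zero : cc 0 = 1 := by
  simp [cc, lam_zero, cE]

lemma cc_rec (k : ℕ) : (k + 1 : ℂ) * cc (k + 1) =
    ∑ p ∈ Finset.HasAntidiagonal.antidiagonal k, ((p.1 + 1 : ℂ) * cc p.1) * ((p.2 + 1 : ℂ) * cc p.2) := by
  simp only [cc_succ]
  rw [← lam_mul, cc, lam_deriv k _ _ cc_aux, E_mul]; norm_num

noncomputable def GG (K : ℕ) : PowerSeries ℂ := E (2 * (K + 1)) * (1 - X) ^ K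
noncomputable def dd (K i : ℕ) : ℂ := lam i (GG K)

lemma GG_deriv (K : ℕ) : d⁄dX ℂ (GG K) * (1 - X) = GG K * ((K : PowerSeries ℂ) + 2 - 2 * ((K : PowerSeries ℂ) + 1) * X) := by
  rw [GG, Derivation.leibniz, deriv_E, smul_eq_mul, smul_eq_mul, derivative_pow, map_sub,
    derivative_X, derivative_one]
  have : C (2 * (K + 1 : ℂ)) = 2 * (K + 1 : PowerSeries ℂ) := by
    rw [map_mul, map_ofNat]; simp
  rw [this]
  cases K with
  | zero => simp; ring
  | succ K => simp; ring

lemma dd_zero (K : ℕ) : dd K 0 = 1 := by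
  simp [dd, lam_zero, GG, cE]

lemma dd_rec (K k : ℕ) : (k + 1 : ℂ) * dd K (k + 1) = (K + 1 + k + 1 : ℂ) *
    ∑ p ∈ Finset.HasAntidiagonal.antidiagonal k, ((p.1 + 1 : ℂ) * cc p.1) * dd K p.2 := by
  simp only [cc_succ]
  simp only [dd]
  rw [← lam_mul]
  set u : PowerSeries ℂ := (1 - C 2 * X)⁻¹
  have hu : u * (1 - C 2 * X) = 1 := PowerSeries.inv_mul_cancel _ (by simp)
  rw [lam_deriv k (GG K) (d⁄dX ℂ (GG K) * E 2 * u) (by rw [mul_assoc _ u, hu, mul_one])]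
  rw [show (K + 1 + k + 1 : ℂ) * lam k (E 2 * GG K) = (K + 2 : ℂ) * lam k (E 2 * GG K)
    + k * lam k (E 2 * GG K) by ring]
  rw [lam_deriv' k (E 2 * GG K) (d⁄dX ℂ (E 2 * GG K) * E 2 * u)
    (by rw [mul_assoc _ u, hu, mul_one]), ← lam_C, ← lam_add]
  congr 1
  have hG := GG_deriv K
  rw [Derivation.leibniz, deriv_E, smul_eq_mul, smul_eq_mul]
  have h0 : E (-2) * E 2 = 1 := by rw [E_mul]; simp [E_zero]
  have : C ((K + 2 : ℂ)) = (K + 2 : PowerSeries ℂ) := by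
    rw [map_add, map_ofNat]; simp
  have h2 : (C (2:ℂ)) = 2 := map_ofNat C 2
  rw [this]
  rw [h2] at hu ⊢
  linear_combination (E 2 * u) * hG + (K + 2) * E 2 * GG K * hu -
    (X * u * (E 2 * d⁄dX ℂ (GG K) + GG K * (2 * E 2))) * h0

end LP
namespace LP
open Finset Classical

lemma FS_empty {α : Type} [LinearOrder α] [Fintype α] : FS (∅ : Finset α) = {fun _ => none} := by
  ext h
  rw [mem_FS, mem_singleton]
  constructor
  · intro hh; funext a; exact (hh a).1 (by simp)
  · rintro rfl a; simp

lemma choose_sum {α : Type} [LinearOrder α] [Fintype α] (A : Finset α) (f g : ℕ → ℂ) :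
    ∑ C ∈ A.powerset, ((C.card.factorial : ℂ) * f C.card) *
      (((A \ C).card.factorial : ℂ) * g (A \ C).card) =
    (A.card.factorial : ℂ) * ∑ p ∈ HasAntidiagonal.antidiagonal A.card, f p.1 * g p.2 := by
  have h1 : ∀ C ∈ A.powerset, ((C.card.factorial : ℂ) * f C.card) *
      (((A \ C).card.factorial : ℂ) * g (A \ C).card) =
      (fun i => ((i.factorial : ℂ) * f i) * (((A.card - i).factorial : ℂ) * g (A.card - i))) C.card := by
    intro C hC
    rw [mem_powerset] at hC
    simp only [card_sdiff_of_subset hC]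
  rw [sum_congr rfl h1, sum_powerset_apply_card (fun i : ℕ => ((i.factorial : ℂ) * f i) * (((A.card - i).factorial : ℂ) * g (A.card - i))), Nat.sum_antidiagonal_eq_sum_range_succ_mk, mul_sum]
  refine sum_congr rfl fun i hi => ?_
  have hi' : i ≤ A.card := by rw [mem_range] at hi; omega
  have := Nat.choose_mul_factorial_mul_factorial hi'
  rw [← this]
  push_cast
  simp only [nsmul_eq_mul]
  ring

lemma QA_eq {α : Type} [LinearOrder α] [Fintype α] (A : Finset α) :
    (QA A : ℂ) = (A.card.factorial : ℂ) * cc A.card := by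
  induction hn : A.card using Nat.strong_induction_on generalizing A with
  | _ n ih =>
    rcases A.eq_empty_or_nonempty with rfl | hne
    · simp at hn; subst hn
      rw [QA, AFS, sum_filter, FS_empty, sum_singleton, if_pos (fun v => Term.nil rfl)]
      simp [cc_zero]
    · set m := A.max' hne
      set A' := A.erase m
      have hA : A = insert m A' := (insert_erase (A.max'_mem hne)).symm
      have hm : ∀ a ∈ A', a < m := by
        intro a ha
        rw [mem_erase] at ha
        exact lt_of_le_of_ne (A.le_max' a ha.2) ha.1
      have hmA : m ∉ A' := by simp [A']
      have hc : A.card = A'.card + 1 := by rw [hA, card_insert_of_notMem hmA]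
      rw [hA, QA_rec m A' hm, ← hn, hc]
      push_cast
      have : ∀ C ∈ A'.powerset, (((A' \ C).card : ℂ) + 1) * (((C.card : ℂ) + 1) * (QA C : ℂ)) * (QA (A' \ C) : ℂ)
          = ((C.card.factorial : ℂ) * (fun i : ℕ => (i + 1 : ℂ) * cc i) C.card) *
      (((A' \ C).card.factorial : ℂ) * (fun i : ℕ => (i + 1 : ℂ) * cc i) (A' \ C).card) := by
        intro C hC
        rw [mem_powerset] at hC
        have h1 := card_le_card hC
        have h2 := card_le_card (sdiff_subset (s := A') (t := C))
        rw [ih C.card (by omega) C rfl, ih (A' \ C).card (by omega) (A' \ C) rfl]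
        ring
      rw [sum_congr rfl this, choose_sum A' (fun i : ℕ => (i + 1 : ℂ) * cc i) (fun i : ℕ => (i + 1 : ℂ) * cc i), ← cc_rec, Nat.factorial_succ]
      push_cast; ring

lemma SA_eq {α : Type} [LinearOrder α] [Fintype α] (K : ℕ) (A : Finset α) :
    (SA (K + 1) A : ℂ) = (A.card.factorial : ℂ) * dd K A.card := by
  induction hn : A.card using Nat.strong_induction_on generalizing A with
  | _ n ih =>
    rcases A.eq_empty_or_nonempty with rfl | hne
    · simp at hn; subst hn
      rw [SA, FS_empty, sum_singleton]
      simp [dd_zero]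
    · set m := A.max' hne
      set A' := A.erase m
      have hA : A = insert m A' := (insert_erase (A.max'_mem hne)).symm
      have hm : ∀ a ∈ A', a < m := by
        intro a ha
        rw [mem_erase] at ha
        exact lt_of_le_of_ne (A.le_max' a ha.2) ha.1
      have hmA : m ∉ A' := by simp [A']
      have hc : A.card = A'.card + 1 := by rw [hA, card_insert_of_notMem hmA]
      rw [hA, SA_rec (K + 1) m A' hm, ← hn, hc]
      push_cast
      have : ∀ C ∈ A'.powerset, ((K : ℂ) + 1 + A'.card + 1) * (((C.card : ℂ) + 1) * (QA C : ℂ)) * (SA (K + 1) (A' \ C) : ℂ)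
          = ((K : ℂ) + 1 + A'.card + 1) * (((C.card.factorial : ℂ) * (fun i : ℕ => (i + 1 : ℂ) * cc i) C.card) *
      (((A' \ C).card.factorial : ℂ) * dd K (A' \ C).card)) := by
        intro C hC
        rw [mem_powerset] at hC
        have h1 := card_le_card hC
        have h2 := card_le_card (sdiff_subset (s := A') (t := C))
        rw [QA_eq, ih (A' \ C).card (by omega) (A' \ C) rfl]
        ring
      rw [sum_congr rfl this, ← mul_sum, choose_sum A' (fun i : ℕ => (i + 1 : ℂ) * cc i) (dd K), Nat.factorial_succ]
      have := dd_rec K A'.card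
      push_cast
      linear_combination -(A'.card.factorial : ℂ) * this

end LP
namespace LP
open Finset Classical

def PN {n : ℕ} (f : Fin n → Fin n) (occ : Fin n → Prop) (v u : Fin n) : Prop :=
  ∃ i, f^[i] v = u ∧ ¬ occ u ∧ ∀ j < i, occ (f^[j] v)

lemma PN_det {n : ℕ} {f : Fin n → Fin n} {occ : Fin n → Prop} {v u u' : Fin n}
    (h : PN f occ v u) (h' : PN f occ v u') : u = u' := by
  obtain ⟨i, hi, ho, hj⟩ := h
  obtain ⟨i', hi', ho', hj'⟩ := h'
  rcases lt_trichotomy i i' with h | h | h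
  · exact absurd (hi ▸ hj' i h) ho
  · subst h; rw [← hi, ← hi']
  · exact absurd (hi' ▸ hj i' h) ho'

lemma find_iff {n : ℕ} (f : Fin n → Fin n) (occ : List (Fin n)) (v : Fin n) (i : ℕ) :
    (List.range n).find? (fun i => decide (f^[i] v ∉ occ)) = some i ↔
      f^[i] v ∉ occ ∧ ∀ j < i, f^[j] v ∈ occ := by
  rw [List.find?_range_eq_some]
  simp only [decide_eq_true_eq, List.mem_range, Bool.not_eq_true', decide_eq_false_iff_not, not_not]
  constructor
  · rintro ⟨h1, _, h3⟩; exact ⟨h1, h3⟩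
  · rintro ⟨h1, h3⟩
    refine ⟨h1, ?_, h3⟩
    have hinj : Function.Injective (fun a : Fin (i + 1) => f^[a.1] v) := by
      have key : ∀ a b : ℕ, a < b → b ≤ i → f^[a] v = f^[b] v → False := by
        intro a b hab hbi hf
        have h4 : f^[i - b] (f^[a] v) = f^[i - b] (f^[b] v) := by rw [hf]
        rw [← Function.iterate_add_apply, ← Function.iterate_add_apply] at h4
        rw [show i - b + b = i by omega] at h4
        exact h1 (h4 ▸ h3 (i - b + a) (by omega))
      intro a b hab
      rcases lt_trichotomy a.1 b.1 with h | h | h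
      · exact (key _ _ h (by omega) hab).elim
      · exact Fin.ext h
      · exact (key _ _ h (by omega) hab.symm).elim
    have := Fintype.card_le_of_injective _ hinj
    simp at this; omega

lemma park_iff {n : ℕ} (f : Fin n → Fin n) (m : ℕ) : ∀ (occ : List (Fin n)) (s : Fin m → Fin n),
    (parkAux n f occ (List.ofFn s)).isSome ↔
      ∃ σ : Fin m → Fin n, ∀ k, PN f (fun x => x ∈ occ ∨ ∃ j < k, σ j = x) (s k) (σ k) := by
  induction m with
  | zero => intro occ s; simp [parkAux]
  | succ m ih =>
    intro occ s
    rw [List.ofFn_succ, parkAux]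
    cases e : (List.range n).find? (fun i => decide (f^[i] (s 0) ∉ occ)) with
    | none =>
      simp only [Option.isSome_none, Bool.false_eq_true, false_iff]
      rintro ⟨σ, hσ⟩
      obtain ⟨i, hi, ho, hj⟩ := hσ 0
      simp only [Fin.not_lt_zero, false_and, exists_false, or_false] at ho hj
      have := (find_iff f occ (s 0) i).2 ⟨hi ▸ ho, hj⟩
      rw [e] at this; cases this
    | some i =>
      have hi := (find_iff f occ (s 0) i).1 e
      simp only
      rw [ih]
      have h0 : ∀ σ : Fin (m + 1) → Fin n, PN f (fun x => x ∈ occ ∨ ∃ j < 0, σ j = x) (s 0) (f^[i] (s 0)) := by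
        intro σ
        refine ⟨i, rfl, ?_, ?_⟩
        · simpa using hi.1
        · simpa using hi.2
      constructor
      · rintro ⟨σ, hσ⟩
        refine ⟨Fin.cons (f^[i] (s 0)) σ, fun k => ?_⟩
        refine Fin.cases ?_ (fun k => ?_) k
        · exact h0 _
        · have := hσ k
          convert this using 2
          rename_i x
          rw [List.mem_cons, Fin.exists_fin_succ]
          simp only [Fin.succ_pos, Fin.cons_zero, true_and, Fin.succ_lt_succ_iff, Fin.cons_succ]
          constructor
          · rintro (h | h | h)
            · exact Or.inl (Or.inr h)
            · exact Or.inl (Or.inl h.symm)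
            · exact Or.inr h
          · rintro ((h | h) | h)
            · exact Or.inr (Or.inl h.symm)
            · exact Or.inl h
            · exact Or.inr (Or.inr h)
          rw [Fin.cons_succ]
      · rintro ⟨σ, hσ⟩
        have hu : σ 0 = f^[i] (s 0) := PN_det (hσ 0) (h0 σ)
        refine ⟨fun k => σ k.succ, fun k => ?_⟩
        have := hσ k.succ
        convert this using 2
        rename_i x
        rw [List.mem_cons, Fin.exists_fin_succ]
        simp only [Fin.succ_pos, true_and, Fin.succ_lt_succ_iff, hu]
        constructor
        · rintro ((h | h) | h)
          · exact Or.inr (Or.inl h.symm)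
          · exact Or.inl h
          · exact Or.inr (Or.inr h)
        · rintro (h | h | h)
          · exact Or.inl (Or.inr h)
          · exact Or.inl (Or.inl h.symm)
          · exact Or.inr h

def OK {n m : ℕ} (f : Fin n → Fin n) (σ : Fin m → Fin n) (s : Fin m → Fin n) : Prop :=
  ∀ k, PN f (fun x => ∃ j < k, σ j = x) (s k) (σ k)

lemma succ_iff {n m : ℕ} (f : Fin n → Fin n) (s : Fin m → Fin n) :
    ParkingSucceeds f s ↔ ∃ σ : Fin m → Fin n, OK f σ s := by
  rw [ParkingSucceeds, park_iff]; simp [OK]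

lemma OK_det {n m : ℕ} {f : Fin n → Fin n} {s σ σ' : Fin m → Fin n} (h : OK f σ s)
    (h' : OK f σ' s) : σ = σ' := by
  have : ∀ N : ℕ, ∀ k : Fin m, k.1 < N → σ k = σ' k := by
    intro N
    induction N with
    | zero => intro k hk; omega
    | succ N ih =>
      intro k hk
      have h1 := h k
      have h2 := h' k
      have : (fun x => ∃ j < k, σ' j = x) = (fun x => ∃ j < k, σ j = x) := by
        funext x
        rw [eq_iff_iff]
        constructor
        · rintro ⟨j, hj, hx⟩; exact ⟨j, hj, by rw [ih j (by omega), hx]⟩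
        · rintro ⟨j, hj, hx⟩; exact ⟨j, hj, by rw [← ih j (by omega), hx]⟩
      rw [this] at h2
      exact PN_det h1 h2
  funext k
  exact this (k.1 + 1) k (by omega)

lemma MCount_eq1 (n m : ℕ) : MCount n m = ∑ σ : Fin m → Fin n, ∑ f : Fin n → Fin n,
    ∏ k : Fin m, (univ.filter fun v => PN f (fun x => ∃ j < k, σ j = x) v (σ k)).card := by
  have h1 : MCount n m = ∑ f : Fin n → Fin n, ∑ s : Fin m → Fin n, ∑ σ : Fin m → Fin n,
      if OK f σ s then 1 else 0 := by
    rw [MCount, Nat.card_eq_fintype_card, Fintype.card_subtype, card_filter, Fintype.sum_prod_type]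
    refine sum_congr rfl fun f _ => sum_congr rfl fun s _ => ?_
    simp only [succ_iff]
    split_ifs with h
    · obtain ⟨σ, hσ⟩ := h
      rw [sum_eq_single σ]
      · rw [if_pos hσ]
      · intro τ _ hτ
        rw [if_neg (fun h2 => hτ (OK_det h2 hσ))]
      · simp
    · rw [sum_eq_zero]
      intro σ _
      rw [if_neg (fun h2 => h ⟨σ, h2⟩)]
  rw [h1, sum_comm]
  rw [sum_congr rfl fun s _ => sum_comm]
  rw [sum_comm]
  refine sum_congr rfl fun σ _ => ?_
  rw [sum_comm]
  refine sum_congr rfl fun f _ => ?_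
  rw [← card_filter]
  rw [← Fintype.card_piFinset]
  congr 1
  ext s
  rw [mem_filter, Fintype.mem_piFinset]
  simp only [mem_filter, mem_univ, true_and, OK]

noncomputable def hs {n m : ℕ} (σ : Fin m → Fin n) (f : Fin n → Fin n) : Fin m → Option (Fin m) :=
  fun k => Function.partialInv σ (f (σ k))

lemma PN_iff {n m : ℕ} {σ : Fin m → Fin n} (hσ : Function.Injective σ) (f : Fin n → Fin n)
    (k : Fin m) (v : Fin n) : PN f (fun x => ∃ j < k, σ j = x) v (σ k) ↔
      ∃ i, Reach (hs σ f) k i ∧ σ i = v := by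
  have hp := hσ.isPartialInv
  constructor
  · rintro ⟨i, hi, ho, hj⟩
    induction i generalizing v with
    | zero => exact ⟨k, Reach.base, hi.symm⟩
    | succ i ih =>
      obtain ⟨j, hjk, hjv⟩ := hj 0 (by omega)
      obtain ⟨w, hw, hw2⟩ := ih (f v) hi (fun j' hj' => hj (j' + 1) (by omega))
      simp only [Function.iterate_zero, id_eq] at hjv
      refine ⟨j, Reach.step hjk ?_ hw, hjv⟩
      rw [hs, hjv]
      exact (hp _ _).2 hw2
  · rintro ⟨i, hr, rfl⟩
    induction hr with
    | base =>
      refine ⟨0, rfl, ?_, by simp⟩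
      rintro ⟨j, hj, he⟩
      exact hj.ne (hσ he)
    | @step v w hv e _ ih =>
      obtain ⟨i, hi, ho, hj⟩ := ih
      have e2 : σ w = f (σ v) := (hp _ _).1 e
      refine ⟨i + 1, by rw [Function.iterate_succ_apply, ← e2, hi], ho, ?_⟩
      intro j hj'
      cases j with
      | zero => exact ⟨v, hv, rfl⟩
      | succ j => rw [Function.iterate_succ_apply, ← e2]; exact hj j (by omega)

lemma PN_card {n m : ℕ} {σ : Fin m → Fin n} (hσ : Function.Injective σ) (f : Fin n → Fin n)
    (k : Fin m) : (univ.filter fun v => PN f (fun x => ∃ j < k, σ j = x) v (σ k)).card =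
      (Bk (hs σ f) k).card := by
  rw [← card_image_of_injective _ hσ]
  congr 1
  ext v
  simp [PN_iff hσ, mem_Bk]

lemma fiber_card {n m : ℕ} {σ : Fin m → Fin n} (hσ : Function.Injective σ)
    (h : Fin m → Option (Fin m)) :
    (univ.filter fun f => hs σ f = h).card = n ^ (n - m) * ∏ k, (if h k = none then n - m else 1) := by
  have hp := hσ.isPartialInv
  have e1 : (univ.filter fun f => hs σ f = h) = Fintype.piFinset
      (fun v => univ.filter fun y => ∀ k, σ k = v → Function.partialInv σ y = h k) := by
    ext f
    simp only [mem_filter, mem_univ, true_and, Fintype.mem_piFinset]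
    constructor
    · rintro rfl v k rfl; rfl
    · intro H; funext k; exact H _ k rfl
  rw [e1, Fintype.card_piFinset]
  have him : (univ.image σ).card = m := by rw [card_image_of_injective _ hσ]; simp
  rw [← prod_sdiff (subset_univ (univ.image σ))]
  congr 1
  · rw [prod_congr rfl (g := fun _ => n), prod_const, card_sdiff_of_subset (subset_univ _), him]
    · simp
    · intro v hv
      have : ∀ k, σ k ≠ v := by simpa using hv
      have e : (univ.filter fun y : Fin n => ∀ k, σ k = v → Function.partialInv σ y = h k) = univ := by
        ext y
        simp only [mem_filter, mem_univ, true_and, iff_true]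
        intro k hk; exact absurd hk (this k)
      rw [e]; simp
  · rw [prod_image (fun a _ b _ h => hσ h)]
    refine prod_congr rfl fun k _ => ?_
    have e : (univ.filter fun y : Fin n => ∀ k', σ k' = σ k → Function.partialInv σ y = h k') =
        univ.filter fun y : Fin n => Function.partialInv σ y = h k := by
      ext y
      simp only [mem_filter, mem_univ, true_and]
      constructor
      · intro H; exact H k rfl
      · intro H k' hk'; rw [hσ hk', H]
    rw [e]
    cases hk : h k with
    | none =>
      have : (univ.filter fun y : Fin n => Function.partialInv σ y = none) = univ \ univ.image σ := by
        ext y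
        simp only [mem_filter, mem_univ, true_and, Finset.mem_sdiff, mem_image, not_exists]
        rw [Option.eq_none_iff_forall_ne_some]
        constructor
        · intro H x hx; exact H x ((hp x y).2 hx)
        · intro H x hx; exact H x ((hp x y).1 hx)
      rw [this, card_sdiff_of_subset (subset_univ _), him]; simp
    | some w =>
      have : (univ.filter fun y : Fin n => Function.partialInv σ y = some w) = {σ w} := by
        ext y
        simp only [mem_filter, mem_univ, true_and, mem_singleton]
        rw [hp w y, eq_comm]
      rw [this]; simp

lemma MCount_eq (n m : ℕ) : MCount n m =
    n.descFactorial m * (n ^ (n - m) * SA (n - m) (univ : Finset (Fin m))) := by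
  rw [MCount_eq1]
  have h1 : ∀ σ : Fin m → Fin n, (∑ f : Fin n → Fin n,
    ∏ k : Fin m, (univ.filter fun v => PN f (fun x => ∃ j < k, σ j = x) v (σ k)).card) =
    if Function.Injective σ then n ^ (n - m) * SA (n - m) (univ : Finset (Fin m)) else 0 := by
    intro σ
    split_ifs with hσ
    · simp only [PN_card hσ]
      rw [← sum_fiberwise_of_maps_to (s := univ) (t := univ) (g := hs σ) (fun _ _ => mem_univ _)]
      have hFS : FS (univ : Finset (Fin m)) = univ := by
        ext h; simp [mem_FS]
      rw [SA, hFS, mul_sum]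
      refine sum_congr rfl fun h _ => ?_
      rw [sum_congr rfl (g := fun _ => ∏ k, (Bk h k).card), sum_const, fiber_card hσ, prod_mul_distrib,
        smul_eq_mul]
      · ring
      · intro f hf
        rw [(mem_filter.1 hf).2]
    · refine sum_eq_zero fun f _ => ?_
      have : ∃ a b, a < b ∧ σ a = σ b := by
        by_contra hc
        push Not at hc
        apply hσ
        intro a b hab
        rcases lt_trichotomy a b with h | h | h
        · exact absurd hab (hc a b h)
        · exact h
        · exact absurd hab.symm (hc b a h)
      obtain ⟨a, b, hab, he⟩ := this
      refine prod_eq_zero (mem_univ b) ?_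
      rw [card_eq_zero]
      ext v
      simp only [mem_filter, mem_univ, true_and, notMem_empty, iff_false]
      rintro ⟨i, _, ho, _⟩
      exact ho ⟨a, hab, he⟩
  rw [sum_congr rfl fun σ _ => h1 σ, ← sum_filter, sum_const, smul_eq_mul]
  congr 1
  have := Fintype.card_embedding_eq (α := Fin m) (β := Fin n)
  rw [Fintype.card_fin, Fintype.card_fin] at this
  rw [← this, ← Fintype.card_subtype]
  exact Fintype.card_congr (Equiv.subtypeInjectiveEquivEmbedding _ _)

end LP
namespace LP
open PowerSeries

def Ev (F : PowerSeries ℂ) (g : ℂ → ℂ) : Prop :=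
  ∀ w : ℂ, (Summable fun k => ‖coeff k F * w ^ k‖) ∧ HasSum (fun k => coeff k F * w ^ k) (g w)

lemma Ev_E (a : ℂ) : Ev (E a) (fun w => Complex.exp (a * w)) := by
  intro w
  have e : ∀ k, coeff k (E a) * w ^ k = (a * w) ^ k / (k.factorial : ℂ) := by
    intro k; rw [coeff_E, mul_pow]; ring
  simp only [e]
  refine ⟨NormedSpace.norm_expSeries_div_summable (𝔸 := ℂ) (a * w), ?_⟩
  rw [Complex.exp_eq_exp_ℂ]
  exact NormedSpace.expSeries_div_hasSum_exp (𝔸 := ℂ) (a * w)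

lemma Ev_lin (a : ℂ) : Ev (1 - C a * X) (fun w => 1 - a * w) := by
  intro w
  have e : ∀ k ∉ Finset.range 2, coeff k (1 - C a * X) * w ^ k = 0 := by
    intro k hk
    rw [Finset.mem_range] at hk
    obtain ⟨j, rfl⟩ : ∃ j, k = j + 2 := ⟨k - 2, by omega⟩
    rw [map_sub, coeff_C_mul, coeff_X, if_neg (by omega), coeff_one, if_neg (by omega)]
    simp
  constructor
  · apply summable_of_ne_finset_zero (s := Finset.range 2)
    intro k hk
    rw [e k hk, norm_zero]
  · have := hasSum_sum_of_ne_finset_zero (L := SummationFilter.unconditional ℕ) e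
    convert this using 1
    simp [Finset.sum_range_succ, coeff_X, coeff_one]
    ring

lemma Ev_mul {F G : PowerSeries ℂ} {f g : ℂ → ℂ} (hF : Ev F f) (hG : Ev G g) :
    Ev (F * G) (fun w => f w * g w) := by
  intro w
  have e : ∀ k, coeff k (F * G) * w ^ k = ∑ p ∈ Finset.HasAntidiagonal.antidiagonal k,
      (coeff p.1 F * w ^ p.1) * (coeff p.2 G * w ^ p.2) := by
    intro k
    rw [coeff_mul, Finset.sum_mul]
    refine Finset.sum_congr rfl fun p hp => ?_
    rw [← Finset.HasAntidiagonal.mem_antidiagonal.1 hp, pow_add]; ring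
  simp only [e]
  have h1 := summable_norm_sum_mul_antidiagonal_of_summable_norm (hF w).1 (hG w).1
  refine ⟨h1, ?_⟩
  have h2 := tsum_mul_tsum_eq_tsum_sum_antidiagonal_of_summable_norm (hF w).1 (hG w).1
  rw [(hF w).2.tsum_eq, (hG w).2.tsum_eq] at h2
  simp only [h2]
  exact h1.of_norm.hasSum

lemma Ev_pow {F : PowerSeries ℂ} {f : ℂ → ℂ} (hF : Ev F f) (K : ℕ) :
    Ev (F ^ K) (fun w => f w ^ K) := by
  induction K with
  | zero =>
    have := Ev_lin 0
    simpa using this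
  | succ K ih => simp only [pow_succ]; exact Ev_mul ih hF

lemma int_exp (k : ℤ) : ∫ θ in (-Real.pi)..Real.pi, Complex.exp (k * (Complex.I * θ)) =
    if k = 0 then 2 * Real.pi else 0 := by
  split_ifs with h
  · subst h; simp; ring
  · have hc : (k * Complex.I : ℂ) ≠ 0 := by simp [h]
    have := integral_exp_mul_complex (a := -Real.pi) (b := Real.pi) hc
    simp only [← mul_assoc]
    rw [this]
    have e : Complex.exp (k * Complex.I * (Real.pi : ℝ)) =
        Complex.exp (k * Complex.I * ((-Real.pi : ℝ) : ℂ)) := by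
      rw [Complex.exp_eq_exp_iff_exists_int]
      refine ⟨k, ?_⟩
      push_cast; ring
    rw [e]; simp

lemma coeff_int {F : PowerSeries ℂ} {g : ℂ → ℂ} (h : Ev F g) (R : ℝ) (m : ℕ) :
    ∫ θ in (-Real.pi)..Real.pi, g (R * Complex.exp (Complex.I * θ)) *
      Complex.exp (-(m * (Complex.I * θ))) = 2 * Real.pi * (R ^ m * coeff m F) := by
  have hs := intervalIntegral.hasSum_integral_of_dominated_convergence (μ := MeasureTheory.volume)
    (a := -Real.pi) (b := Real.pi) (ι := ℕ)
    (F := fun k θ => coeff k F * (R * Complex.exp (Complex.I * θ)) ^ k *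
      Complex.exp (-(m * (Complex.I * θ))))
    (f := fun θ => g (R * Complex.exp (Complex.I * θ)) *
      Complex.exp (-(m * (Complex.I * θ))))
    (fun k _ => ‖coeff k F * (R : ℂ) ^ k‖) ?_ ?_ ?_ ?_ ?_
  · have e : ∀ k : ℕ, ∫ θ in (-Real.pi)..Real.pi, coeff k F * (R * Complex.exp (Complex.I * θ)) ^ k *
      Complex.exp (-(m * (Complex.I * θ))) = if k = m then 2 * Real.pi * (R ^ m * coeff m F) else 0 := by
      intro k
      have e1 : ∀ θ : ℝ, coeff k F * (R * Complex.exp (Complex.I * θ)) ^ k *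
        Complex.exp (-(m * (Complex.I * θ))) = coeff k F * R ^ k *
          Complex.exp (((k : ℤ) - (m : ℤ) : ℤ) * (Complex.I * θ)) := by
        intro θ
        rw [mul_pow, ← Complex.exp_nat_mul, mul_assoc, mul_assoc, ← Complex.exp_add, ← mul_assoc]
        congr 2
        push_cast; ring
      simp only [e1]
      rw [intervalIntegral.integral_const_mul, int_exp]
      by_cases hk : k = m
      · subst hk; simp; ring
      · rw [if_neg (by omega), if_neg hk]; simp
    simp only [e] at hs
    have h3 := hs.unique (hasSum_ite_eq m _)
    exact h3
  · intro k
    apply Continuous.aestronglyMeasurable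
    fun_prop
  · intro k
    refine Eventually.of_forall fun θ _ => ?_
    rw [norm_mul, norm_mul, norm_mul, norm_pow, norm_mul]
    have : ‖Complex.exp (Complex.I * θ)‖ = 1 := by
      rw [mul_comm]; exact Complex.norm_exp_ofReal_mul_I θ
    have h2 : ‖Complex.exp (-(m * (Complex.I * θ)))‖ = 1 := by
      rw [show -(m * (Complex.I * θ)) = ((-(m * θ) : ℝ) : ℂ) * Complex.I by push_cast; ring]
      exact Complex.norm_exp_ofReal_mul_I _
    rw [this, h2, norm_pow]; simp
  · exact Eventually.of_forall fun θ _ => (h R).1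
  · simp
  · refine Eventually.of_forall fun θ _ => ?_
    exact (h _).2.mul_right _

end LP
namespace LP
open PowerSeries

noncomputable def hh (n m : ℕ) (θ : ℝ) : ℂ :=
  Complex.exp (2 * m * (Complex.exp (Complex.I * θ) - 1) - m * (Complex.I * θ)) *
  ((1 - (m / n : ℝ) * Complex.exp (Complex.I * θ)) / (1 - (m / n : ℝ) : ℂ)) ^ (n - m) *
  ((1 - 2 * ((m / n : ℝ) * Complex.exp (Complex.I * θ))) /
    (1 - (m / n : ℝ) * Complex.exp (Complex.I * θ)))

noncomputable def PP (n m : ℕ) : ℝ :=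
  (n.descFactorial m : ℝ) * m.factorial * Real.exp (2 * m) * (1 - m / n) ^ (n - m) /
    ((n : ℝ) ^ (2 * m) * (m / n : ℝ) ^ m)

lemma one_sub_ne {r θ : ℝ} (h0 : 0 ≤ r) (h1 : r < 1) :
    (1 - (r : ℂ) * Complex.exp (Complex.I * θ)) ≠ 0 := by
  intro h
  have h2 : ‖(r : ℂ) * Complex.exp (Complex.I * θ)‖ = 1 := by
    rw [← sub_eq_zero.1 h]; simp
  rw [norm_mul, mul_comm Complex.I, Complex.norm_exp_ofReal_mul_I, mul_one, Complex.norm_real,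
    Real.norm_of_nonneg h0] at h2
  linarith

lemma exact_formula (n m : ℕ) (hm : 0 < m) (hmn : m < n) :
    ((MCount n m : ℝ) / (n : ℝ) ^ (n + m) : ℝ) =
      ((PP n m / (2 * Real.pi) : ℝ) : ℂ) * ∫ θ in (-Real.pi)..Real.pi, hh n m θ := by
  obtain ⟨K, hK⟩ : ∃ K, n - m = K + 1 := ⟨n - m - 1, by omega⟩
  set r : ℝ := m / n with hr
  have hn0 : (0 : ℝ) < n := by exact_mod_cast (by omega : 0 < n)
  have hm0 : (0 : ℝ) < m := by exact_mod_cast hm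
  have hr0 : 0 < r := by positivity
  have hr1 : r < 1 := by rw [hr, div_lt_one hn0]; exact_mod_cast hmn
  have hnr : (n : ℂ) * r = m := by
    rw [hr]; push_cast
    have : (n : ℂ) ≠ 0 := by exact_mod_cast hn0.ne'
    field_simp
  have hEv : Ev (GG K * E (2 * m) * (1 - C 2 * X))
      (fun w => Complex.exp (2 * (K + 1) * w) * (1 - 1 * w) ^ K * Complex.exp (2 * m * w) * (1 - 2 * w)) := by
    have h1 := Ev_pow (Ev_lin 1) K
    rw [map_one, one_mul] at h1
    exact Ev_mul (Ev_mul (Ev_mul (Ev_E _) h1) (Ev_E _)) (Ev_lin 2)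
  have hI := coeff_int hEv r m
  have hnK : (n : ℂ) = (K : ℂ) + 1 + m := by
    exact_mod_cast (by omega : n = K + 1 + m)
  have hint : ∀ θ : ℝ, (Complex.exp (2 * (K + 1) * (r * Complex.exp (Complex.I * θ))) *
      (1 - 1 * (r * Complex.exp (Complex.I * θ))) ^ K *
      Complex.exp (2 * m * (r * Complex.exp (Complex.I * θ))) *
      (1 - 2 * (r * Complex.exp (Complex.I * θ)))) * Complex.exp (-(m * (Complex.I * θ))) =
      ((Real.exp (2 * m) * (1 - r) ^ (n - m) : ℝ) : ℂ) * hh n m θ := by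
    intro θ
    have hne := one_sub_ne (θ := θ) hr0.le hr1
    have hne2 : (1 - (r : ℂ)) ≠ 0 := by
      have : (1 - r) ≠ 0 := by linarith
      exact_mod_cast this
    rw [hh, ← hr, hK, div_pow, pow_succ]
    have hexp : Complex.exp (2 * m * (Complex.exp (Complex.I * θ) - 1) - m * (Complex.I * θ)) *
       Complex.exp (2 * m) =
       Complex.exp (2 * (K + 1) * (r * Complex.exp (Complex.I * θ))) *
       Complex.exp (2 * m * (r * Complex.exp (Complex.I * θ))) * Complex.exp (-(m * (Complex.I * θ))) := by
      rw [← Complex.exp_add, ← Complex.exp_add, ← Complex.exp_add]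
      congr 1
      rw [show (2 * (K + 1) * (r * Complex.exp (Complex.I * θ)) + 2 * m * (r * Complex.exp (Complex.I * θ)) : ℂ) = 2 * ((K + 1 + m) * r) * Complex.exp (Complex.I * θ) by ring, ← hnK, hnr]
      ring
    push_cast
    rw [one_mul]
    generalize Complex.exp (2 * m * (Complex.exp (Complex.I * θ) - 1) - m * (Complex.I * θ)) = A1 at hexp ⊢
    generalize Complex.exp (2 * (K + 1) * (r * Complex.exp (Complex.I * θ))) = A2 at hexp ⊢
    generalize Complex.exp (2 * m * (r * Complex.exp (Complex.I * θ))) = A3 at hexp ⊢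
    generalize Complex.exp (-(m * (Complex.I * θ))) = A4 at hexp ⊢
    generalize Complex.exp (2 * m) = A5 at hexp ⊢
    generalize Complex.exp (Complex.I * θ) = e at *
    have hQ : ((1 - r * e) ^ K * (1 - r * e) / ((1 - r : ℂ) ^ (K + 1))) * ((1 - 2 * (r * e)) / (1 - r * e)) * (1 - r : ℂ) ^ (K + 1) = (1 - r * e) ^ K * (1 - 2 * (r * e)) := by
      have := pow_ne_zero (K + 1) hne2
      generalize (1 - r : ℂ) ^ (K + 1) = B at *
      field_simp
    linear_combination (-A1 * A5) * hQ + (-(1 - r * e) ^ K * (1 - 2 * (r * e))) * hexp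
  simp only [hint] at hI
  rw [intervalIntegral.integral_const_mul] at hI
  have hSA := SA_eq K (Finset.univ : Finset (Fin m))
  rw [Finset.card_univ, Fintype.card_fin] at hSA
  rw [dd, lam] at hSA
  have hr0' : (r : ℂ) ≠ 0 := by exact_mod_cast hr0.ne'
  have hn0' : (n : ℂ) ≠ 0 := by exact_mod_cast hn0.ne'
  have hpi : (Real.pi : ℂ) ≠ 0 := by exact_mod_cast Real.pi_ne_zero
  rw [MCount_eq, PP, ← hr]
  rw [hK] at hI ⊢
  push_cast at hI ⊢
  rw [hSA]
  rw [show n + m = K + 1 + 2 * m by omega, pow_add]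
  generalize (∫ θ in (-Real.pi)..Real.pi, hh n m θ) = J at hI ⊢
  generalize (coeff m) (GG K * E (2 * m) * (1 - C 2 * X)) = c at hI ⊢
  field_simp
  linear_combination (-(n.descFactorial m : ℂ) * m.factorial * n ^ (K + 1) * n ^ (2 * m)) * hI

end LP
namespace LP

lemma fact_st (n : ℕ) (hn : 0 < n) : (n.factorial : ℝ) =
    Stirling.stirlingSeq n * (√(2 * n) * ((n : ℝ) ^ n / Real.exp n)) := by
  have hn0 : (0 : ℝ) < n := by exact_mod_cast hn
  rw [Stirling.stirlingSeq, div_pow, ← Real.exp_nat_mul, mul_one]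
  have : √(2 * (n : ℝ)) ≠ 0 := by positivity
  field_simp

lemma PP_eq (n m : ℕ) (hm : 0 < m) (hmn : m < n) : PP n m =
    √n * (Stirling.stirlingSeq n * Stirling.stirlingSeq m / Stirling.stirlingSeq (n - m) *
      √(2 * (m / n : ℝ) / (1 - m / n))) := by
  obtain ⟨N, hN, rfl⟩ : ∃ N, 0 < N ∧ n = m + N := ⟨n - m, by omega, by omega⟩
  have hm0 : (0 : ℝ) < m := by exact_mod_cast hm
  have hN0 : (0 : ℝ) < N := by exact_mod_cast hN
  have hd : ((m + N).descFactorial m : ℝ) = (m + N).factorial / N.factorial := by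
    have := Nat.factorial_mul_descFactorial (show m ≤ m + N by omega)
    rw [show m + N - m = N by omega] at this
    rw [eq_div_iff (by positivity), mul_comm]
    exact_mod_cast this
  rw [PP, hd, fact_st (m + N) (by omega), fact_st m hm, fact_st N hN]
  rw [show m + N - m = N by omega]
  have hsN : 0 < Stirling.stirlingSeq N := by
    obtain ⟨k, rfl⟩ : ∃ k, N = k + 1 := ⟨N - 1, by omega⟩
    exact Stirling.stirlingSeq'_pos k
  generalize Stirling.stirlingSeq (m + N) = a
  generalize Stirling.stirlingSeq m = b
  generalize Stirling.stirlingSeq N = c at *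
  push_cast
  have e1 : (1 - (m : ℝ) / (m + N)) = N / (m + N) := by field_simp; ring
  rw [e1]
  have e2 : (2 * ((m : ℝ) / (m + N)) / (N / (m + N))) = 2 * m / N := by field_simp
  rw [e2]
  rw [Real.sqrt_mul (by norm_num), Real.sqrt_mul (by norm_num) (N : ℝ), Real.sqrt_div (by positivity),
    Real.sqrt_mul (by norm_num) (m : ℝ)]
  rw [show Real.exp (2 * m) = Real.exp m * Real.exp m by rw [← Real.exp_add]; ring_nf, Real.exp_add]
  have s2 : √(2 : ℝ) ≠ 0 := by positivity
  have sN : √(N : ℝ) ≠ 0 := by positivity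
  generalize √(2 : ℝ) = t2 at *
  generalize √(N : ℝ) = tN at *
  generalize √(m : ℝ) = tm at *
  generalize √((m : ℝ) + N) = ts at *
  have hem := (Real.exp_pos (m : ℝ)).ne'
  have heN := (Real.exp_pos (N : ℝ)).ne'
  generalize Real.exp (m : ℝ) = em at *
  generalize Real.exp (N : ℝ) = eN at *
  have hs0 : (0 : ℝ) < m + N := by positivity
  rw [div_pow, div_pow, pow_add, two_mul, pow_add]
  have p1 := (pow_pos hs0 m).ne'
  have p2 := (pow_pos hs0 N).ne'
  have p3 := (pow_pos hN0 N).ne'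
  have p4 := (pow_pos hm0 m).ne'
  generalize ((m : ℝ) + N) ^ m = q1 at *
  generalize ((m : ℝ) + N) ^ N = q2 at *
  generalize (N : ℝ) ^ N = q3 at *
  generalize (m : ℝ) ^ m = q4 at *
  have := hsN.ne'
  field_simp

lemma tend_PP (ρ : ℝ) (h1 : ρ < 1) (m : ℕ → ℕ)
    (hlim : Tendsto (fun n => (m n : ℝ) / n) atTop (nhds ρ))
    (hm : Tendsto m atTop atTop) (hN : Tendsto (fun n => n - m n) atTop atTop) :
    Tendsto (fun n => PP n (m n) / √n) atTop (nhds (√Real.pi * √(2 * ρ / (1 - ρ)))) := by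
  have S := Stirling.tendsto_stirlingSeq_sqrt_pi
  have hpi : √Real.pi ≠ 0 := by positivity
  have key := ((S.mul (S.comp hm)).div (S.comp hN) hpi).mul
    (((hlim.const_mul 2).div (hlim.const_sub 1) (by linarith)).sqrt)
  rw [mul_div_assoc, div_self hpi, mul_one] at key
  refine key.congr' ?_
  filter_upwards [hm.eventually_gt_atTop 0, hN.eventually_gt_atTop 0] with n h1 h2
  have hn : 0 < n := by omega
  have : √(n : ℝ) ≠ 0 := by
    have : (0 : ℝ) < n := by exact_mod_cast hn
    positivity
  rw [PP_eq n (m n) h1 (by omega), mul_div_cancel_left₀ _ this]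
  simp

end LP
namespace LP
lemma sq_inv_lim : Tendsto (fun n : ℕ => (√(n : ℝ))⁻¹) atTop (nhds 0) :=
  tendsto_inv_atTop_zero.comp (Real.tendsto_sqrt_atTop.comp tendsto_natCast_atTop_atTop)

lemma lim_e2 (t : ℝ) : Tendsto (fun n : ℕ => (n : ℂ) *
    (Complex.exp (Complex.I * ((t / √(n : ℝ) : ℝ) : ℂ)) - 1 - Complex.I * ((t / √(n : ℝ) : ℝ) : ℂ)))
    atTop (nhds (-(t : ℂ) ^ 2 / 2)) := by
  have h1 : Tendsto (fun n : ℕ => (n : ℂ) *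
    (Complex.exp (Complex.I * ((t / √(n : ℝ) : ℝ) : ℂ)) - 1 - Complex.I * ((t / √(n : ℝ) : ℝ) : ℂ)
      - (Complex.I * ((t / √(n : ℝ) : ℝ) : ℂ)) ^ 2 / 2)) atTop (nhds 0) := by
    have hb : Tendsto (fun n : ℕ => |t| ^ 3 * (√(n : ℝ))⁻¹ * Real.exp (|t| * (√(n : ℝ))⁻¹)) atTop
        (nhds (|t| ^ 3 * 0 * Real.exp (|t| * 0))) :=
      (sq_inv_lim.const_mul _).mul ((Real.continuous_exp.tendsto _).comp (sq_inv_lim.const_mul _))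
    rw [mul_zero, zero_mul] at hb
    refine squeeze_zero_norm' ?_ hb
    filter_upwards [eventually_gt_atTop 0] with n hn
    have hn0 : (0 : ℝ) < n := by exact_mod_cast hn
    have hs : 0 < √(n : ℝ) := by positivity
    set x : ℂ := Complex.I * ((t / √(n : ℝ) : ℝ) : ℂ) with hx
    have hxn : ‖x‖ = |t| * (√(n : ℝ))⁻¹ := by
      rw [hx, norm_mul, Complex.norm_I, one_mul, Complex.norm_real, Real.norm_eq_abs, abs_div,
        abs_of_pos hs, div_eq_mul_inv]
    have := Complex.norm_exp_sub_sum_le_norm_mul_exp x 3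
    simp only [Finset.sum_range_succ, Finset.sum_range_zero] at this
    norm_num at this
    rw [norm_mul, Complex.norm_natCast]
    have e : Complex.exp x - 1 - x - x ^ 2 / 2 = Complex.exp x - (1 + x + x ^ 2 / 2) := by ring
    rw [e]
    calc (n : ℝ) * ‖Complex.exp x - (1 + x + x ^ 2 / 2)‖ ≤ n * (‖x‖ ^ 3 * Real.exp ‖x‖) := by gcongr
      _ = _ := by
        rw [hxn]
        have : (n : ℝ) = √(n : ℝ) ^ 2 := (Real.sq_sqrt hn0.le).symm
        generalize √(n : ℝ) = s at *
        rw [this]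
        field_simp
  have h2 := h1.add_const (-(t : ℂ) ^ 2 / 2)
  rw [zero_add] at h2
  refine h2.congr' ?_
  filter_upwards [eventually_gt_atTop 0] with n hn
  have hn0 : (0 : ℝ) < n := by exact_mod_cast hn
  have hs : 0 < √(n : ℝ) := by positivity
  have : (n : ℂ) * (Complex.I * ((t / √(n : ℝ) : ℝ) : ℂ)) ^ 2 = - (t : ℂ) ^ 2 := by
    rw [mul_pow, Complex.I_sq]
    have e : ((n : ℝ) * (t / √(n : ℝ)) ^ 2) = t ^ 2 := by
      rw [div_pow, Real.sq_sqrt hn0.le]; field_simp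
    have e' := congrArg (fun z : ℝ => (z : ℂ)) e
    push_cast at e' ⊢
    linear_combination -e'
  linear_combination (-1 / 2) * this

lemma lim_e1 (t : ℝ) : Tendsto (fun n : ℕ => ((√(n : ℝ) : ℝ) : ℂ) *
    (Complex.exp (Complex.I * ((t / √(n : ℝ) : ℝ) : ℂ)) - 1))
    atTop (nhds (Complex.I * t)) := by
  have h1 := ((Complex.continuous_ofReal.tendsto _).comp sq_inv_lim).mul (lim_e2 t)
  have h2 := h1.add_const (Complex.I * t)
  simp only [Complex.ofReal_zero, zero_mul, zero_add] at h2
  refine h2.congr' ?_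
  filter_upwards [eventually_gt_atTop 0] with n hn
  have hn0 : (0 : ℝ) < n := by exact_mod_cast hn
  have hs : (√(n : ℝ)) ≠ 0 := by positivity
  have e : ((n : ℂ)) = ((√(n : ℝ) : ℝ) : ℂ) * ((√(n : ℝ) : ℝ) : ℂ) := by
    rw [← Complex.ofReal_mul, Real.mul_self_sqrt hn0.le]; simp
  have hs' : ((√(n : ℝ) : ℝ) : ℂ) ≠ 0 := by exact_mod_cast hs
  simp only [Function.comp]
  rw [e]
  push_cast
  field_simp
  ring

lemma lim_log (ε : ℕ → ℂ) (c : ℂ)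
    (h : Tendsto (fun n : ℕ => ((√(n : ℝ) : ℝ) : ℂ) * ε n) atTop (nhds c)) :
    Tendsto ε atTop (nhds 0) ∧
    Tendsto (fun n : ℕ => (n : ℂ) * (Complex.log (1 + ε n) - ε n + ε n ^ 2 / 2)) atTop (nhds 0) := by
  have hε : Tendsto ε atTop (nhds 0) := by
    have := ((Complex.continuous_ofReal.tendsto _).comp sq_inv_lim).mul h
    simp only [Complex.ofReal_zero, zero_mul] at this
    refine this.congr' ?_
    filter_upwards [eventually_gt_atTop 0] with n hn
    have hn0 : (0 : ℝ) < n := by exact_mod_cast hn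
    have hs : (√(n : ℝ)) ≠ 0 := by positivity
    have hs' : ((√(n : ℝ) : ℝ) : ℂ) ≠ 0 := by exact_mod_cast hs
    simp only [Function.comp]
    push_cast
    field_simp
  refine ⟨hε, ?_⟩
  have hb : Tendsto (fun n : ℕ => ‖((√(n : ℝ) : ℝ) : ℂ) * ε n‖ ^ 2 * ‖ε n‖) atTop (nhds 0) := by
    have := (h.norm.pow 2).mul hε.norm
    rwa [norm_zero, mul_zero] at this
  refine squeeze_zero_norm' ?_ hb
  have hsm : ∀ᶠ n in atTop, ‖ε n‖ < 1 / 2 := by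
    have := hε.norm
    rw [norm_zero] at this
    exact this.eventually_lt_const (by norm_num)
  filter_upwards [hsm] with n hn
  have := Complex.norm_log_sub_logTaylor_le 2 (z := ε n) (by linarith)
  have e : Complex.logTaylor (2 + 1) (ε n) = ε n - ε n ^ 2 / 2 := by
    simp [Complex.logTaylor_succ, Complex.logTaylor_zero]
    ring
  rw [e] at this
  rw [norm_mul, Complex.norm_natCast, norm_mul, Complex.norm_real, Real.norm_of_nonneg (by positivity),
    mul_pow, Real.sq_sqrt (by positivity)]
  have h3 : (1 - ‖ε n‖)⁻¹ ≤ 2 := by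
    rw [inv_le_comm₀ (by linarith) (by norm_num)]; linarith
  have h4 : ‖Complex.log (1 + ε n) - ε n + ε n ^ 2 / 2‖ ≤ ‖ε n‖ ^ 3 := by
    rw [show Complex.log (1 + ε n) - ε n + ε n ^ 2 / 2 = Complex.log (1 + ε n) - (ε n - ε n ^ 2 / 2) by ring]
    refine this.trans ?_
    have : ‖ε n‖ ^ (2 + 1) * (1 - ‖ε n‖)⁻¹ ≤ ‖ε n‖ ^ 3 * 2 := by gcongr
    have p : 0 ≤ ‖ε n‖ ^ 3 := by positivity
    push_cast
    linarith
  calc (n : ℝ) * ‖Complex.log (1 + ε n) - ε n + ε n ^ 2 / 2‖ ≤ n * ‖ε n‖ ^ 3 := by gcongr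
    _ = _ := by ring

lemma hh_lim (ρ : ℝ) (h1 : ρ < 1) (m : ℕ → ℕ)
    (hlim : Tendsto (fun n => (m n : ℝ) / n) atTop (nhds ρ))
    (hmn : ∀ᶠ n in atTop, m n < n) (t : ℝ) :
    Tendsto (fun n : ℕ => hh n (m n) (t / √(n : ℝ))) atTop
      (nhds (Complex.exp (((-(ρ * (1 - 2 * ρ) / (1 - ρ) / 2) * t ^ 2 : ℝ) : ℂ)) *
        (((1 - 2 * ρ) / (1 - ρ) : ℝ) : ℂ))) := by
  have hr : Tendsto (fun n => (((m n : ℝ) / n : ℝ) : ℂ)) atTop (nhds (ρ : ℂ)) :=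
    (Complex.continuous_ofReal.tendsto _).comp hlim
  have hρ : (1 - (ρ : ℂ)) ≠ 0 := by
    have : (1 - ρ) ≠ 0 := by linarith
    exact_mod_cast this
  set e : ℕ → ℂ := fun n => Complex.exp (Complex.I * ((t / √(n : ℝ) : ℝ) : ℂ)) - 1 with he
  set r : ℕ → ℂ := fun n => (((m n : ℝ) / n : ℝ) : ℂ) with hrd
  have hk : Tendsto (fun n => -(r n / (1 - r n))) atTop (nhds (-(ρ / (1 - ρ) : ℂ))) :=
    (hr.div (hr.const_sub 1) hρ).neg
  have hse := lim_e1 t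
  have hε1 : Tendsto (fun n : ℕ => ((√(n : ℝ) : ℝ) : ℂ) * (-(r n / (1 - r n)) * e n)) atTop
      (nhds (-(ρ / (1 - ρ) : ℂ) * (Complex.I * t))) := by
    refine (hk.mul hse).congr fun n => ?_
    simp only [he]; ring
  obtain ⟨hε0, hL⟩ := lim_log _ _ hε1
  have hee : Tendsto e atTop (nhds 0) := by
    exact (lim_log _ _ hse).1
  set x : ℕ → ℂ := fun n => r n * ((n : ℂ) * (e n - Complex.I * ((t / √(n : ℝ) : ℝ) : ℂ))) -
    r n ^ 2 / (1 - r n) / 2 * (((√(n : ℝ) : ℝ) : ℂ) * e n) ^ 2 +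
    (1 - r n) * ((n : ℂ) * (Complex.log (1 + -(r n / (1 - r n)) * e n) - (-(r n / (1 - r n)) * e n)
      + (-(r n / (1 - r n)) * e n) ^ 2 / 2)) with hx
  have hxl : Tendsto x atTop (nhds ((-(ρ * (1 - 2 * ρ) / (1 - ρ) / 2) * t ^ 2 : ℝ) : ℂ)) := by
    have := ((hr.mul (lim_e2 t)).sub ((((hr.pow 2).div (hr.const_sub 1) hρ).div_const 2).mul (hse.pow 2))).add
      ((hr.const_sub 1).mul hL)
    have hval : ((-(ρ * (1 - 2 * ρ) / (1 - ρ) / 2) * t ^ 2 : ℝ) : ℂ) =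
      ρ * (-t ^ 2 / 2) - ρ ^ 2 / (1 - ρ) / 2 * (Complex.I * t) ^ 2 + (1 - ρ) * 0 := by
      push_cast
      rw [mul_pow, Complex.I_sq]
      field_simp
      ring
    rw [hval]
    exact this
  have hfac : Tendsto (fun n => (1 - 2 * (r n * (e n + 1))) / (1 - r n * (e n + 1))) atTop
      (nhds (((1 - 2 * ρ) / (1 - ρ) : ℝ) : ℂ)) := by
    have h3 : Tendsto (fun n => r n * (e n + 1)) atTop (nhds (ρ * (0 + 1))) := hr.mul (hee.add_const 1)
    rw [zero_add, mul_one] at h3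
    push_cast
    exact ((h3.const_mul 2).const_sub 1).div (h3.const_sub 1) hρ
  refine (((Complex.continuous_exp.tendsto _).comp hxl).mul hfac).congr' ?_
  have hsm : ∀ᶠ n in atTop, ‖-(r n / (1 - r n)) * e n‖ < 1 := by
    have := hε0.norm
    rw [norm_zero] at this
    exact this.eventually_lt_const (by norm_num)
  filter_upwards [hsm, hmn] with n hn hmn'
  have hn0 : (0 : ℝ) < n := by exact_mod_cast (by omega : 0 < n)
  have hnc : (n : ℂ) ≠ 0 := by exact_mod_cast hn0.ne'
  have hmr : (m n : ℂ) = n * r n := by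
    simp only [hrd]; push_cast; field_simp
  have hNr : ((n - m n : ℕ) : ℂ) = n * (1 - r n) := by
    rw [Nat.cast_sub hmn'.le, hmr]; ring
  have hr1 : (1 - r n) ≠ 0 := by
    intro h
    rw [h, mul_zero] at hNr
    have : n - m n = 0 := by exact_mod_cast hNr
    omega
  have h1ε : 1 + -(r n / (1 - r n)) * e n ≠ 0 := by
    intro h
    rw [← neg_eq_iff_add_eq_zero] at h
    rw [← h] at hn
    simp at hn
  have hss : ((√(n : ℝ) : ℝ) : ℂ) ^ 2 = n := by
    rw [← Complex.ofReal_pow, Real.sq_sqrt hn0.le]; simp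
  have hexe : Complex.exp (Complex.I * ((t / √(n : ℝ) : ℝ) : ℂ)) = e n + 1 := by
    simp only [he]; ring
  have hfr : (1 - r n * (e n + 1)) / (1 - r n) = 1 + -(r n / (1 - r n)) * e n := by
    field_simp; ring
  have hxn : x n = (2 * m n * e n - m n * (Complex.I * ((t / √(n : ℝ) : ℝ) : ℂ))) +
      ((n - m n : ℕ) : ℂ) * Complex.log (1 + -(r n / (1 - r n)) * e n) := by
    rw [hNr, hmr]
    simp only [hx]
    rw [mul_pow, hss]
    field_simp
    ring
  simp only [Function.comp]
  rw [hh, hexe, show (((m n : ℝ) / n : ℝ) : ℂ) = r n from rfl, hfr, hxn, Complex.exp_add, Complex.exp_nat_mul,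
    Complex.exp_log h1ε]
  ring_nf

end LP
namespace LP

lemma norm_sq_one_sub (r θ : ℝ) : ‖(1 - (r : ℂ) * Complex.exp (Complex.I * θ))‖ ^ 2 =
    (1 - r) ^ 2 + 2 * r * (1 - Real.cos θ) := by
  rw [Complex.sq_norm, Complex.normSq_apply, mul_comm Complex.I, Complex.exp_mul_I]
  simp only [Complex.sub_re, Complex.sub_im, Complex.one_re, Complex.one_im, Complex.mul_re, Complex.mul_im,
    Complex.add_re, Complex.add_im, Complex.ofReal_re, Complex.ofReal_im, Complex.I_re, Complex.I_im,
    Complex.cos_ofReal_re, Complex.sin_ofReal_re, Complex.cos_ofReal_im, Complex.sin_ofReal_im]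
  linear_combination r ^ 2 * Real.sin_sq_add_cos_sq θ

lemma hh_bound (n m : ℕ) (hmn : 2 * m < n) (θ : ℝ) :
    ‖hh n m θ‖ ≤ 4 * Real.exp (-((m / n : ℝ) * (1 - 2 * (m / n : ℝ)) / (1 - m / n) * (n * (1 - Real.cos θ)))) := by
  have hn0 : (0 : ℝ) < n := by exact_mod_cast (by omega : 0 < n)
  have hmr : (m : ℝ) = n * (m / n : ℝ) := by field_simp
  have hr2 : (m / n : ℝ) < 1 / 2 := by
    rw [div_lt_iff₀ hn0]
    have : (2 * m : ℝ) < n := by exact_mod_cast hmn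
    linarith
  have hr0 : 0 ≤ (m / n : ℝ) := by positivity
  rw [hh]
  have hNr : ((n - m : ℕ) : ℝ) = n * (1 - m / n) := by
    rw [Nat.cast_sub (by omega)]; field_simp
  generalize (m / n : ℝ) = r at *
  set u : ℝ := 1 - Real.cos θ with hu
  have hu0 : 0 ≤ u := by rw [hu]; linarith [Real.cos_le_one θ]
  have hr1 : 0 < 1 - r := by linarith
  have hw : ‖(r : ℂ) * Complex.exp (Complex.I * θ)‖ = r := by
    rw [norm_mul, mul_comm Complex.I, Complex.norm_exp_ofReal_mul_I, mul_one, Complex.norm_real,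
      Real.norm_of_nonneg hr0]
  have n1 : ‖Complex.exp (2 * m * (Complex.exp (Complex.I * θ) - 1) - m * (Complex.I * θ))‖ =
      Real.exp (-(2 * m * u)) := by
    rw [Complex.norm_exp]
    congr 1
    rw [mul_comm Complex.I, Complex.exp_mul_I]
    simp
    rw [hu]
    simp only [← Complex.ofReal_cos, Complex.ofReal_re]
    ring
  have n2 : ‖(1 - (r : ℂ) * Complex.exp (Complex.I * θ)) / (1 - r)‖ ≤ Real.exp (r * u / (1 - r) ^ 2) := by
    have h1r : ‖(1 - (r : ℂ))‖ = 1 - r := by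
      rw [← Complex.ofReal_one, ← Complex.ofReal_sub, Complex.norm_real, Real.norm_of_nonneg hr1.le]
    apply le_of_sq_le_sq _ (Real.exp_pos _).le
    rw [norm_div, div_pow, norm_sq_one_sub, h1r, ← Real.exp_nat_mul, ← hu]
    have := Real.add_one_le_exp ((2 : ℕ) * (r * u / (1 - r) ^ 2))
    refine le_trans (le_of_eq ?_) this
    push_cast
    field_simp
    ring
  have n3 : ‖(1 - 2 * ((r : ℂ) * Complex.exp (Complex.I * θ))) / (1 - (r : ℂ) * Complex.exp (Complex.I * θ))‖ ≤ 4 := by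
    have a1 : ‖(1 - 2 * ((r : ℂ) * Complex.exp (Complex.I * θ)))‖ ≤ 2 := by
      refine (norm_sub_le _ _).trans ?_
      rw [norm_mul, hw]
      norm_num
      linarith
    have a2 : 1 / 2 ≤ ‖(1 - (r : ℂ) * Complex.exp (Complex.I * θ))‖ := by
      have := norm_sub_norm_le (1 : ℂ) ((r : ℂ) * Complex.exp (Complex.I * θ))
      rw [hw, norm_one] at this
      linarith
    rw [norm_div, div_le_iff₀ (by linarith)]
    linarith
  rw [norm_mul, norm_mul, norm_pow, n1]
  calc _ ≤ Real.exp (-(2 * m * u)) * Real.exp (r * u / (1 - r) ^ 2) ^ (n - m) * 4 := by gcongr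
    _ = _ := by
      rw [← Real.exp_nat_mul, ← Real.exp_add, mul_comm]
      congr 2
      rw [hNr, hmr]
      field_simp
      ring

lemma meas_hh (n m : ℕ) : Measurable (hh n m) := by
  unfold hh
  fun_prop

lemma laplace (ρ : ℝ) (h0 : 0 < ρ) (h1 : ρ < 1 / 2) (m : ℕ → ℕ)
    (hlim : Tendsto (fun n => (m n : ℝ) / n) atTop (nhds ρ))
    (hmn : ∀ᶠ n in atTop, 2 * m n < n) :
    Tendsto (fun n : ℕ => ((√(n : ℝ) : ℝ) : ℂ) * ∫ θ in (-Real.pi)..Real.pi, hh n (m n) θ) atTop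
      (nhds (((√(Real.pi / (ρ * (1 - 2 * ρ) / (1 - ρ) / 2)) * ((1 - 2 * ρ) / (1 - ρ)) : ℝ) : ℂ))) := by
  set q : ℝ := ρ * (1 - 2 * ρ) / (1 - ρ) with hq
  have hq0 : 0 < q := by
    have : 0 < 1 - 2 * ρ := by linarith
    have : 0 < 1 - ρ := by linarith
    positivity
  have hqlim : Tendsto (fun n => (m n / n : ℝ) * (1 - 2 * (m n / n : ℝ)) / (1 - m n / n)) atTop (nhds q) :=
    (hlim.mul ((hlim.const_mul 2).const_sub 1)).div (hlim.const_sub 1) (by linarith)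
  have hqe : ∀ᶠ n : ℕ in atTop, q / 2 < (m n / n : ℝ) * (1 - 2 * (m n / n : ℝ)) / (1 - m n / n) :=
    hqlim.eventually_const_lt (by linarith)
  set κ : ℝ := q / Real.pi ^ 2 with hκ
  have hκ0 : 0 < κ := by positivity
  have hpi := Real.pi_pos
  have hD : Tendsto (fun n : ℕ => ∫ t : ℝ, (Set.Ioc (-Real.pi * √(n : ℝ)) (Real.pi * √(n : ℝ))).indicator
      (fun t => hh n (m n) (t / √(n : ℝ))) t) atTop
      (nhds (∫ t : ℝ, (((Real.exp (-(q / 2) * t ^ 2) * ((1 - 2 * ρ) / (1 - ρ)) : ℝ) : ℂ)))) := by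
    apply MeasureTheory.tendsto_integral_filter_of_dominated_convergence
      (fun t => 4 * Real.exp (-κ * t ^ 2))
    · refine Eventually.of_forall fun n => ?_
      apply Measurable.aestronglyMeasurable
      exact ((meas_hh n (m n)).comp (measurable_id.div_const _)).indicator measurableSet_Ioc
    · filter_upwards [hqe, hmn] with n hn1 hn2
      refine Eventually.of_forall fun t => ?_
      have hn0 : (0 : ℝ) < n := by exact_mod_cast (by omega : 0 < n)
      have hs : 0 < √(n : ℝ) := by positivity
      by_cases ht : t ∈ Set.Ioc (-Real.pi * √(n : ℝ)) (Real.pi * √(n : ℝ))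
      · rw [Set.indicator_of_mem ht]
        refine (hh_bound n (m n) hn2 _).trans ?_
        have hab : |t / √(n : ℝ)| ≤ Real.pi := by
          rw [abs_div, abs_of_pos hs, div_le_iff₀ hs, abs_le]
          exact ⟨by linarith [ht.1], ht.2⟩
        have hc := Real.cos_le_one_sub_mul_cos_sq hab
        have hc2 : 2 / Real.pi ^ 2 * t ^ 2 ≤ n * (1 - Real.cos (t / √(n : ℝ))) := by
          have e : (n : ℝ) * (t / √(n : ℝ)) ^ 2 = t ^ 2 := by
            rw [div_pow, Real.sq_sqrt hn0.le]; field_simp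
          calc 2 / Real.pi ^ 2 * t ^ 2 = n * (2 / Real.pi ^ 2 * (t / √(n : ℝ)) ^ 2) := by
                rw [← e]; ring
            _ ≤ _ := by gcongr; linarith
        gcongr
        have := mul_le_mul hn1.le hc2 (by positivity) (by linarith)
        refine le_trans (neg_le_neg this) (le_of_eq ?_)
        rw [hκ]; field_simp
      · rw [Set.indicator_of_notMem ht, norm_zero]; positivity
    · exact (integrable_exp_neg_mul_sq hκ0).const_mul 4
    · refine Eventually.of_forall fun t => ?_
      have hl := hh_lim ρ (by linarith) m hlim (hmn.mono fun n h => by omega) t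
      rw [← hq, ← Complex.ofReal_exp, ← Complex.ofReal_mul] at hl
      refine hl.congr' ?_
      have hbig : ∀ᶠ n : ℕ in atTop, |t| / Real.pi < √(n : ℝ) :=
        (Real.tendsto_sqrt_atTop.comp tendsto_natCast_atTop_atTop).eventually_gt_atTop _
      filter_upwards [hbig] with n hn
      rw [div_lt_iff₀ hpi] at hn
      rw [Set.indicator_of_mem]
      have := abs_lt.1 hn
      exact ⟨by linarith [this.1], by linarith [this.2]⟩
  rw [integral_complex_ofReal, MeasureTheory.integral_mul_const, integral_gaussian] at hD
  refine hD.congr' ?_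
  filter_upwards [hmn] with n hn
  have hn0 : (0 : ℝ) < n := by exact_mod_cast (by omega : 0 < n)
  have hs : 0 < √(n : ℝ) := by positivity
  rw [MeasureTheory.integral_indicator measurableSet_Ioc, ← intervalIntegral.integral_of_le (by nlinarith),
    intervalIntegral.integral_comp_div (fun θ => hh n (m n) θ) hs.ne', mul_div_cancel_right₀ _ hs.ne',
    mul_div_cancel_right₀ _ hs.ne']
  simp

end LP
/-- (Lackner–Panholzer, Corollary 4.11, subcritical case) Fix `ρ ∈ (0, 1/2)` and set
`m = ⌊ρn⌋`.  The probability `p_{n,m} = M_{n,m} / n^(n+m)` that a uniformly random pair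
`(f, s)`, with `f` an `n`-mapping and `s ∈ {1,…,n}^m`, is a mapping parking function
satisfies `lim_{n→∞} p_{n,m} = √(1-2ρ)/(1-ρ)`. -/
theorem lackner_panholzer_corollary_4_11_subcritical (ρ : ℝ) (h0 : 0 < ρ) (h1 : ρ < 1 / 2) :
    Tendsto
      (fun n : ℕ =>
        (MCount n ⌊ρ * (n : ℝ)⌋₊ : ℝ) / (n : ℝ) ^ (n + ⌊ρ * (n : ℝ)⌋₊))
      atTop (nhds (Real.sqrt (1 - 2 * ρ) / (1 - ρ))) := by
  set m : ℕ → ℕ := fun n => ⌊ρ * (n : ℝ)⌋₊ with hmdef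
  have hlim : Tendsto (fun n => (m n : ℝ) / n) atTop (nhds ρ) :=
    (tendsto_nat_floor_mul_div_atTop h0.le).comp tendsto_natCast_atTop_atTop
  have hle : ∀ n : ℕ, (m n : ℝ) ≤ ρ * n := fun n => Nat.floor_le (by positivity)
  have hm : Tendsto m atTop atTop :=
    tendsto_nat_floor_atTop.comp (tendsto_natCast_atTop_atTop.const_mul_atTop h0)
  have hmn : ∀ᶠ n in atTop, 2 * m n < n := by
    filter_upwards [eventually_gt_atTop 0] with n hn
    have hn0 : (0 : ℝ) < n := by exact_mod_cast hn
    have : (2 * m n : ℝ) < n := by nlinarith [hle n]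
    exact_mod_cast this
  have hN : Tendsto (fun n => n - m n) atTop atTop := by
    refine tendsto_atTop_mono' _ ?_ hm
    filter_upwards [hmn] with n hn
    omega
  have hPP := LP.tend_PP ρ (by linarith) m hlim hm hN
  have hLa := LP.laplace ρ h0 h1 m hlim hmn
  have key := (((Complex.continuous_ofReal.tendsto _).comp hPP).mul hLa).mul_const
    (((2 * Real.pi)⁻¹ : ℝ) : ℂ)
  rw [← Complex.ofReal_mul, ← Complex.ofReal_mul] at key
  have hval : √Real.pi * √(2 * ρ / (1 - ρ)) *
      (√(Real.pi / (ρ * (1 - 2 * ρ) / (1 - ρ) / 2)) * ((1 - 2 * ρ) / (1 - ρ))) * (2 * Real.pi)⁻¹ =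
      √(1 - 2 * ρ) / (1 - ρ) := by
    have a1 : 0 < 1 - 2 * ρ := by linarith
    have a2 : 0 < 1 - ρ := by linarith
    have hpi := Real.pi_pos
    have e : √Real.pi * √(2 * ρ / (1 - ρ)) * √(Real.pi / (ρ * (1 - 2 * ρ) / (1 - ρ) / 2)) =
        2 * Real.pi / √(1 - 2 * ρ) := by
      rw [← Real.sqrt_mul hpi.le, ← Real.sqrt_mul (by positivity)]
      have : Real.pi * (2 * ρ / (1 - ρ)) * (Real.pi / (ρ * (1 - 2 * ρ) / (1 - ρ) / 2)) =
          (2 * Real.pi) ^ 2 / (1 - 2 * ρ) := by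
        field_simp
      rw [this, Real.sqrt_div (by positivity), Real.sqrt_sq (by positivity)]
    rw [← mul_assoc, e]
    have hs : √(1 - 2 * ρ) ≠ 0 := by positivity
    have hs2 : √(1 - 2 * ρ) ^ 2 = 1 - 2 * ρ := Real.sq_sqrt a1.le
    field_simp
    linarith
  rw [hval] at key
  have key2 : Tendsto (fun n : ℕ => (((MCount n (m n) : ℝ) / (n : ℝ) ^ (n + m n) : ℝ) : ℂ)) atTop
      (nhds ((√(1 - 2 * ρ) / (1 - ρ) : ℝ) : ℂ)) := by
    refine key.congr' ?_
    filter_upwards [hmn, hm.eventually_gt_atTop 0] with n hn hn2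
    rw [LP.exact_formula n (m n) hn2 (by omega)]
    have hn0 : (0 : ℝ) < n := by exact_mod_cast (by omega : 0 < n)
    have hs : ((√(n : ℝ) : ℝ) : ℂ) ≠ 0 := by
      have : √(n : ℝ) ≠ 0 := by positivity
      exact_mod_cast this
    have hpi : (Real.pi : ℂ) ≠ 0 := by exact_mod_cast Real.pi_ne_zero
    simp only [Function.comp]
    push_cast
    field_simp
  have := (Complex.continuous_re.tendsto _).comp key2
  simpa only [Function.comp_def, Complex.ofReal_re] using this
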